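/- There exists a sequence of reals t_k with t_k → 0 as k → ∞ such that for every integer k ≥ 3 and every real r with 0 < r < 2^(k-1)·ln 2 − (ln 2)/2 − (1 + t_k)/2, the probability that a random k-CNF formula F_k(n, m) with m = ⌊rn⌋ clauses is NAE-satisfiable tends to 1 as n → ∞. -/

import Mathlib

/-- A proper `k`-clause on `n` Boolean variables: a set of `k` literals
on `k` distinct variables.  A literal is a pair `(v, s)`. -/
def IsProperClause (n k : ℕ) (C : Finset (Fin n × Bool)) : Prop :=
  C.card = k ∧ (C.image Prod.fst).card = k

/-- An assignment NAE-satisfies a clause if it satisfies at least one literal and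
fails to satisfy at least one literal. -/
def NAESatisfiesClause {n : ℕ} (σ : Fin n → Bool) (C : Finset (Fin n × Bool)) : Prop :=
  (∃ l ∈ C, σ l.1 = l.2) ∧ (∃ l ∈ C, σ l.1 ≠ l.2)

/-- A formula is NAE-satisfiable if some assignment NAE-satisfies every clause. -/
def IsNAESatisfiable {n : ℕ} (F : Finset (Finset (Fin n × Bool))) : Prop :=
  ∃ σ : Fin n → Bool, ∀ C ∈ F, NAESatisfiesClause σ C

section
open scoped BigOperators
open Finset

lemma nks_expect_prod {C : Type*} [Fintype C] [Nonempty C] (m : ℕ) (g : C → ℝ) :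
    (𝔼 F : Fin m → C, ∏ i, g (F i)) = (𝔼 c, g c) ^ m := by
  rw [Fintype.expect_eq_sum_div_card, Fintype.expect_eq_sum_div_card, div_pow, Fintype.sum_pow]
  simp

lemma nks_expect_succ {C : Type*} [Fintype C] [Nonempty C] (m : ℕ) (g : (Fin (m+1) → C) → ℝ) :
    (𝔼 F : Fin (m+1) → C, g F) = 𝔼 F : Fin m → C, 𝔼 c, g (Fin.cons c F) := by
  have h1 : (∑ F : Fin (m+1) → C, g F) = ∑ c, ∑ F : Fin m → C, g (Fin.cons c F) := by
    rw [← Fintype.sum_prod_type' (f := fun c (F : Fin m → C) => g (Fin.cons c F))]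
    exact (Fintype.sum_equiv (Fin.consEquiv (fun _ => C)) _ _ (fun x => rfl)).symm
  simp only [Fintype.expect_eq_sum_div_card]
  rw [h1, Finset.sum_comm, ← Finset.sum_div, div_div]
  congr 1
  simp [pow_succ, mul_comm]

lemma nks_log_lower {y : ℝ} (hy : 3/4 ≤ y) : (y - 1) - (y-1)^2 ≤ Real.log y := by
  rcases le_total 1 y with h | h
  · have := Real.one_sub_inv_le_log_of_pos (show 0 < y by linarith)
    refine le_trans ?_ this
    have hy0 : 0 < y := by linarith
    have : 1 - y⁻¹ - ((y - 1) - (y-1)^2) = (y-1)^2 * (y-1) / y := by field_simp; ring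
    have h2 : 0 ≤ (y-1)^2 * (y-1) / y := by
      apply div_nonneg _ hy0.le
      exact mul_nonneg (sq_nonneg _) (by linarith)
    linarith
  · -- use log y = 2 log sqrt y
    have hy0 : 0 < y := by linarith
    set s := Real.sqrt y with hs
    have hs0 : 0 < s := Real.sqrt_pos.mpr hy0
    have hss : s ^ 2 = y := Real.sq_sqrt hy0.le
    have hl : Real.log y = 2 * Real.log s := by rw [← hss, Real.log_pow]; norm_num
    have := Real.one_sub_inv_le_log_of_pos hs0
    rw [hl]
    have hs1 : s ≤ 1 := by nlinarith
    have hs2 : (43/50:ℝ) ≤ s := by nlinarith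
    have key : (s^2 - 1) - (s^2-1)^2 ≤ 2 * (1 - s⁻¹) := by
      have : 2 * (1 - s⁻¹) - ((s^2 - 1) - (s^2-1)^2) = (1 - s) * ( (1+s)*s + (1-s)*(1+s)^2*s - 2) / s := by
        field_simp; ring
      have h3 : 0 ≤ (1+s)*s + (1-s)*(1+s)^2*s - 2 := by
        have e : (1+s)*s + (1-s)*(1+s)^2*s - 2 = (1-s) * ((1+s)^2*s - (s+2)) := by ring
        rw [e]
        apply mul_nonneg (by linarith)
        nlinarith [mul_nonneg (sub_nonneg.2 hs2) hs0.le, mul_nonneg (sub_nonneg.2 hs2) (sq_nonneg s)]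
      have : 0 ≤ (1 - s) * ( (1+s)*s + (1-s)*(1+s)^2*s - 2) / s :=
        div_nonneg (mul_nonneg (by linarith) h3) hs0.le
      linarith
    rw [← hss]; linarith

/-- Jensen for log -/
lemma nks_jensen {A : Type*} [Fintype A] [Nonempty A] (g : A → ℝ) (hg : ∀ a, 0 < g a) :
    (𝔼 a, Real.log (g a)) ≤ Real.log (𝔼 a, g a) := by
  have hpos : 0 < 𝔼 a, g a := Finset.expect_pos (fun a _ => hg a) univ_nonempty
  set E := 𝔼 a, g a with hE
  have h : ∀ a, Real.log (g a) ≤ Real.log E + (g a / E - 1) := by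
    intro a
    have := Real.log_le_sub_one_of_pos (div_pos (hg a) hpos)
    rw [Real.log_div (hg a).ne' hpos.ne'] at this
    linarith
  calc (𝔼 a, Real.log (g a)) ≤ 𝔼 a, (Real.log E + (g a / E - 1)) := Finset.expect_le_expect (fun a _ => h a)
    _ = Real.log E := by
      rw [Finset.expect_add_distrib, Finset.expect_sub_distrib, ← Finset.expect_div, Fintype.expect_const, Fintype.expect_const, ← hE, div_self hpos.ne']
      ring

/-- weighted Jensen for log -/
lemma nks_jensen_w {A : Type*} [Fintype A] [Nonempty A] (p g : A → ℝ) (hp : ∀ a, 0 < p a) :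
    (𝔼 a, p a * g a) ≤ (𝔼 a, p a) * (Real.log (𝔼 a, p a * Real.exp (g a)) - Real.log (𝔼 a, p a)) := by
  have hpos : 0 < 𝔼 a, p a := Finset.expect_pos (fun a _ => hp a) univ_nonempty
  have hpos2 : 0 < 𝔼 a, p a * Real.exp (g a) :=
    Finset.expect_pos (fun a _ => mul_pos (hp a) (Real.exp_pos _)) univ_nonempty
  set P := 𝔼 a, p a with hP
  set Q := 𝔼 a, p a * Real.exp (g a) with hQ
  set L := Real.log Q - Real.log P with hL
  have hexpL : Real.exp L = Q / P := by
    rw [hL, Real.exp_sub, Real.exp_log hpos2, Real.exp_log hpos]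
  have h : ∀ a, p a * g a ≤ p a * (L - 1) + p a * Real.exp (g a) * Real.exp (-L) := by
    intro a
    have := Real.add_one_le_exp (g a - L)
    rw [sub_eq_add_neg, Real.exp_add] at this
    have := mul_le_mul_of_nonneg_left this (hp a).le
    nlinarith
  calc (𝔼 a, p a * g a) ≤ 𝔼 a, (p a * (L - 1) + p a * Real.exp (g a) * Real.exp (-L)) := Finset.expect_le_expect (fun a _ => h a)
    _ = P * L := by
      rw [Finset.expect_add_distrib, ← Finset.expect_mul, ← Finset.expect_mul, ← hP, ← hQ, Real.exp_neg, hexpL]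
      field_simp; ring

section abs
variable {C S : Type*} [Fintype C] [Nonempty C] [Fintype S] [Nonempty S]

noncomputable def nksH (w : C → S → ℝ) (t : ℕ) (F : Fin t → C) : ℝ := 𝔼 σ, ∏ i, w (F i) σ

noncomputable def nksK (w v : C → S → ℝ) (σ τ : S) : ℝ := 𝔼 c, w c σ * v c τ

lemma nks_sec (w v : C → S → ℝ) (m : ℕ) (g : S → S → ℝ):
    (𝔼 F : Fin m → C, 𝔼 σ, 𝔼 τ, (∏ i, w (F i) σ) * (∏ i, v (F i) τ) * g σ τ)
      = 𝔼 σ, 𝔼 τ, (nksK w v σ τ)^m * g σ τ := by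
  rw [Finset.expect_comm]
  congr 1; ext σ
  rw [Finset.expect_comm]
  congr 1; ext τ
  rw [← Finset.expect_mul]
  congr 1
  unfold nksK
  rw [← nks_expect_prod]
  simp [Finset.prod_mul_distrib]

lemma nks_step (w : C → S → ℝ) (hw : ∀ c σ, 3/4 ≤ w c σ) (hw1 : ∀ σ, (𝔼 c, w c σ) = 1)
    (M B : ℝ) (hM : 0 < M) (t : ℕ)
    (hB : (𝔼 σ, 𝔼 τ, (nksK w w σ τ)^t * Real.exp (M * (nksK w w σ τ - 1))) ≤ Real.exp B) :
    -(𝔼 F, Real.log (nksH w (t+1) F)) ≤ -(𝔼 F, Real.log (nksH w t F)) +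
      (1/M) * (B + 2 * -(𝔼 F, Real.log (nksH w t F))) := by
  have hw0 : ∀ c σ, 0 < w c σ := fun c σ => by linarith [hw c σ]
  have hHpos : ∀ t (F : Fin t → C), 0 < nksH w t F := fun t F =>
    Finset.expect_pos (fun σ _ => Finset.prod_pos fun i _ => hw0 _ _) univ_nonempty
  -- per-formula step
  set A : (Fin t → C) → ℝ := fun F => 𝔼 σ, 𝔼 τ, (∏ i, w (F i) σ) * (∏ i, w (F i) τ) * Real.exp (M * (nksK w w σ τ - 1)) with hA
  have hApos : ∀ F, 0 < A F := fun F =>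
    Finset.expect_pos (fun σ _ => Finset.expect_pos (fun τ _ => mul_pos (mul_pos (Finset.prod_pos fun i _ => hw0 _ _) (Finset.prod_pos fun i _ => hw0 _ _)) (Real.exp_pos _)) univ_nonempty) univ_nonempty
  have key : ∀ F : Fin t → C, Real.log (nksH w t F) - (1/M) * (Real.log (A F) - 2 * Real.log (nksH w t F))
      ≤ 𝔼 c, Real.log (nksH w (t+1) (Fin.cons c F)) := by
    intro F
    set H := nksH w t F with hH
    have hp := hHpos t F
    rw [← hH] at hp
    set y : C → ℝ := fun c => nksH w (t+1) (Fin.cons c F) / H with hy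
    have hcons : ∀ c, nksH w (t+1) (Fin.cons c F) = 𝔼 σ, w c σ * ∏ i, w (F i) σ := by
      intro c; unfold nksH; simp [Fin.prod_univ_succ]
    have hy2 : ∀ c, 3/4 ≤ y c := by
      intro c
      rw [hy]; simp only
      rw [le_div_iff₀ hp, hcons, hH]; unfold nksH
      rw [Finset.mul_expect]
      exact Finset.expect_le_expect fun σ _ => mul_le_mul_of_nonneg_right (hw c σ) (Finset.prod_nonneg fun i _ => (hw0 _ _).le)
    have hlog : ∀ c, Real.log H + ((y c - 1) - (y c - 1)^2) ≤ Real.log (nksH w (t+1) (Fin.cons c F)) := by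
      intro c
      have := nks_log_lower (hy2 c)
      rw [hy] at this; simp only at this
      rw [Real.log_div (hHpos _ _).ne' hp.ne'] at this
      simp only [hy]; linarith
    have hEy : (𝔼 c, y c) = 1 := by
      simp only [hy, hcons]
      rw [← Finset.expect_div, Finset.expect_comm]
      rw [div_eq_one_iff_eq hp.ne', hH]; unfold nksH
      congr 1; ext σ
      rw [← Finset.expect_mul, hw1, one_mul]
    have hEy2 : (𝔼 c, (y c)^2) * H^2 = 𝔼 σ, 𝔼 τ, (∏ i, w (F i) σ) * (∏ i, w (F i) τ) * nksK w w σ τ := by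
      rw [Finset.expect_mul]
      have : ∀ c, (y c)^2 * H^2 = 𝔼 σ, 𝔼 τ, (∏ i, w (F i) σ) * (∏ i, w (F i) τ) * (w c σ * w c τ) := by
        intro c
        rw [← mul_pow]
        simp only [hy]
        rw [div_mul_cancel₀ _ hp.ne', hcons, sq, Finset.expect_mul_expect]
        congr 1; ext σ; congr 1; ext τ; ring
      simp only [this]
      rw [Finset.expect_comm]
      congr 1; ext σ
      rw [Finset.expect_comm]
      congr 1; ext τ
      unfold nksK
      rw [Finset.mul_expect]
    have hH2 : H^2 = 𝔼 σ, 𝔼 τ, (∏ i, w (F i) σ) * (∏ i, w (F i) τ) := by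
      rw [hH, sq]; unfold nksH; rw [Finset.expect_mul_expect]
    -- weighted Jensen on pairs
    have hJ := nks_jensen_w (A := S × S) (fun a => (∏ i, w (F i) a.1) * (∏ i, w (F i) a.2))
      (fun a => M * (nksK w w a.1 a.2 - 1)) (fun a => mul_pos (Finset.prod_pos fun i _ => hw0 _ _) (Finset.prod_pos fun i _ => hw0 _ _))
    have hprod : ∀ f : S → S → ℝ, (𝔼 a : S × S, f a.1 a.2) = 𝔼 σ, 𝔼 τ, f σ τ := by
      intro f
      exact Finset.expect_product' univ univ f
    rw [hprod (fun σ τ => (∏ i, w (F i) σ) * (∏ i, w (F i) τ) * (M * (nksK w w σ τ - 1))),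
      hprod (fun σ τ => (∏ i, w (F i) σ) * (∏ i, w (F i) τ)),
      hprod (fun σ τ => (∏ i, w (F i) σ) * (∏ i, w (F i) τ) * Real.exp (M * (nksK w w σ τ - 1))), ← hH2] at hJ
    have hJ2 : (𝔼 σ, 𝔼 τ, (∏ i, w (F i) σ) * (∏ i, w (F i) τ) * (M * (nksK w w σ τ - 1))) = M * ((𝔼 c, (y c)^2) * H^2 - H^2) := by
      rw [hEy2, hH2, ← Finset.expect_sub_distrib, Finset.mul_expect]
      congr 1; ext σ
      rw [← Finset.expect_sub_distrib, Finset.mul_expect]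
      congr 1; ext τ; ring
    rw [hJ2, show M * ((𝔼 c, (y c)^2) * H^2 - H^2) = H^2 * (M * ((𝔼 c, (y c)^2) - 1)) by ring] at hJ
    have hJ3 := le_of_mul_le_mul_left hJ (by positivity)
    rw [Real.log_pow] at hJ3
    have hfin : (𝔼 c, (Real.log H + ((y c - 1) - (y c - 1)^2))) = Real.log H - ((𝔼 c, (y c)^2) - 1) := by
      have : ∀ c, (Real.log H + ((y c - 1) - (y c - 1)^2)) = (Real.log H - 2) + 3 * y c - (y c)^2 := by intro c; ring
      simp only [this]
      rw [Finset.expect_sub_distrib, Finset.expect_add_distrib, ← Finset.mul_expect, hEy, Fintype.expect_const]; ring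
    have : (𝔼 c, (y c)^2) - 1 ≤ (1/M) * (Real.log (A F) - 2 * Real.log H) := by
      rw [one_div, inv_mul_eq_div, le_div_iff₀ hM]
      have : Real.log (A F) - 2 * Real.log H = Real.log (A F) - ((2:ℕ):ℝ) * Real.log H := by norm_num
      rw [this]; linarith
    calc _ ≤ Real.log H - ((𝔼 c, (y c)^2) - 1) := by linarith
      _ = _ := hfin.symm
      _ ≤ _ := Finset.expect_le_expect fun c _ => hlog c
  have hEA : (𝔼 F, Real.log (A F)) ≤ B := by
    refine (nks_jensen A hApos).trans ?_
    rw [Real.log_le_iff_le_exp (Finset.expect_pos (fun F _ => hApos F) univ_nonempty)]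
    simp only [hA]
    rw [nks_sec w w t (fun σ τ => Real.exp (M * (nksK w w σ τ - 1)))]
    exact hB
  have := Finset.expect_le_expect (s := univ) fun F _ => key F
  rw [Finset.expect_sub_distrib, ← Finset.mul_expect, Finset.expect_sub_distrib, ← Finset.mul_expect, ← nks_expect_succ t (fun F => Real.log (nksH w (t+1) F))] at this
  have h2 : (1/M) * (𝔼 F, Real.log (A F)) ≤ (1/M) * B := mul_le_mul_of_nonneg_left hEA (by positivity)
  linarith

lemma nks_gronwall (w : C → S → ℝ) (hw : ∀ c σ, 3/4 ≤ w c σ) (hw1 : ∀ σ, (𝔼 c, w c σ) = 1)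
    (M B : ℝ) (hM : 0 < M) (m : ℕ)
    (hB : ∀ t ≤ m, (𝔼 σ, 𝔼 τ, (nksK w w σ τ)^t * Real.exp (M * (nksK w w σ τ - 1))) ≤ Real.exp B) :
    -(𝔼 F, Real.log (nksH w m F)) + B/2 ≤ (1 + 2/M)^m * (B/2) := by
  induction m with
  | zero =>
    simp [nksH]
  | succ t ih =>
    have h1 := nks_step w hw hw1 M B hM t (hB t (Nat.le_succ t))
    have h2 := ih (fun s hs => hB s (hs.trans (Nat.le_succ t)))
    have h3 : 0 ≤ 1 + 2/M := by positivity
    have h4 := mul_le_mul_of_nonneg_left h2 h3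
    rw [pow_succ]
    have : (1 + 2/M) * (-(𝔼 F, Real.log (nksH w t F)) + B/2) = -(𝔼 F, Real.log (nksH w t F)) +
      (1/M) * (B + 2 * -(𝔼 F, Real.log (nksH w t F))) + B/2 := by field_simp; ring
    linarith

/-- main abstract bound on probability that nothing satisfies. -/
lemma nks_abstract (w f : C → S → ℝ) (hw : ∀ c σ, 3/4 ≤ w c σ) (hw1 : ∀ σ, (𝔼 c, w c σ) = 1)
    (M B U δ η : ℝ) (hM : 0 < M) (m : ℕ)
    (hB : ∀ t ≤ m, (𝔼 σ, 𝔼 τ, (nksK w w σ τ)^t * Real.exp (M * (nksK w w σ τ - 1))) ≤ Real.exp B)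
    (hU : (1 + 2/M)^m * (B/2) ≤ U) (hB0 : 0 ≤ B)
    (hδ : (𝔼 σ, 𝔼 τ, ((nksK f f σ τ)^m - 2 * (nksK f w σ τ)^m + (nksK w w σ τ)^m)) ≤ δ)
    (hη : 0 < η) (hη1 : Real.log η < -1)
    (P : (Fin m → C) → Prop) [DecidablePred P] (hP : ∀ F, P F → ∀ σ, ∏ i, f (F i) σ = 0) :
    (𝔼 F, if P F then (1:ℝ) else 0) ≤ U / (- Real.log η - 1) + δ / η^2 := by
  have hw0 : ∀ c σ, 0 < w c σ := fun c σ => by linarith [hw c σ]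
  have hHpos : ∀ t (F : Fin t → C), 0 < nksH w t F := fun t F =>
    Finset.expect_pos (fun σ _ => Finset.prod_pos fun i _ => hw0 _ _) univ_nonempty
  have hG := nks_gronwall w hw hw1 M B hM m hB
  have hEH : (𝔼 F, nksH w m F) = 1 := by
    unfold nksH
    rw [Finset.expect_comm]
    have : ∀ σ, (𝔼 F : Fin m → C, ∏ i, w (F i) σ) = 1 := by
      intro σ
      rw [nks_expect_prod m (fun c => w c σ), hw1, one_pow]
    simp [this]
  have hD : (𝔼 F, (nksH f m F - nksH w m F)^2) ≤ δ := by
    refine le_of_eq_of_le ?_ hδ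
    have h1 := nks_sec f f m (fun _ _ => 1)
    have h2 := nks_sec f w m (fun _ _ => 1)
    have h3 := nks_sec w w m (fun _ _ => 1)
    simp only [mul_one] at h1 h2 h3
    have : ∀ F : Fin m → C, (nksH f m F - nksH w m F)^2 =
       (𝔼 σ, 𝔼 τ, (∏ i, f (F i) σ) * (∏ i, f (F i) τ)) - 2 * (𝔼 σ, 𝔼 τ, (∏ i, f (F i) σ) * (∏ i, w (F i) τ))
        + (𝔼 σ, 𝔼 τ, (∏ i, w (F i) σ) * (∏ i, w (F i) τ)) := by
      intro F
      simp only [← Finset.expect_mul_expect]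
      simp only [nksH]; ring
    simp only [this]
    rw [Finset.expect_add_distrib, Finset.expect_sub_distrib, ← Finset.mul_expect, h1, h2, h3]
    simp only [Finset.expect_add_distrib, Finset.expect_sub_distrib, Finset.mul_expect]
  have hL : 0 < - Real.log η - 1 := by linarith
  have hpt : ∀ F : Fin m → C, (if P F then (1:ℝ) else 0) ≤
      (nksH w m F - 1 - Real.log (nksH w m F)) / (- Real.log η - 1) + (nksH f m F - nksH w m F)^2 / η^2 := by
    intro F
    have hp := hHpos m F
    have hg : 0 ≤ nksH w m F - 1 - Real.log (nksH w m F) := by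
      have := Real.log_le_sub_one_of_pos hp; linarith
    split_ifs with h
    · have hf0 : nksH f m F = 0 := by simp [nksH, hP F h]
      rw [hf0]
      by_cases hc : nksH w m F < η
      · have : 1 ≤ (nksH w m F - 1 - Real.log (nksH w m F)) / (- Real.log η - 1) := by
          rw [le_div_iff₀ hL]
          have := Real.log_lt_log hp hc
          linarith
        have : 0 ≤ (0 - nksH w m F)^2 / η^2 := by positivity
        linarith
      · push Not at hc
        have : 1 ≤ (0 - nksH w m F)^2 / η^2 := by
          rw [le_div_iff₀ (by positivity)]
          nlinarith
        have : 0 ≤ (nksH w m F - 1 - Real.log (nksH w m F)) / (- Real.log η - 1) := div_nonneg hg hL.le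
        linarith
    · exact add_nonneg (div_nonneg hg hL.le) (by positivity)
  refine (Finset.expect_le_expect fun F _ => hpt F).trans ?_
  rw [Finset.expect_add_distrib, ← Finset.expect_div, ← Finset.expect_div, Finset.expect_sub_distrib, Finset.expect_sub_distrib, hEH, Fintype.expect_const]
  gcongr
  linarith
end abs
end

section
open scoped BigOperators
open Finset

noncomputable def nksSp (b : Bool) : ℝ := if b then 1 else -1

lemma nksSp_cases (b : Bool) : nksSp b = 1 ∨ nksSp b = -1 := by cases b <;> simp [nksSp]

lemma nksSp_mul (a b : Bool) : nksSp a * nksSp b = nksSp (a == b) := by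
  cases a <;> cases b <;> simp [nksSp]

noncomputable def nksY {n : ℕ} (l : Fin n × Bool) (σ : Fin n → Bool) : ℝ := nksSp l.2 * nksSp (σ l.1)

noncomputable def nksW (k n : ℕ) (γ θ : ℝ) (c : Fin k → Fin n × Bool) (σ : Fin n → Bool) : ℝ :=
  1 - γ * (((∏ i, (1 + θ * nksY (c i) σ)) + ∏ i, (1 + (-θ) * nksY (c i) σ)) / 2 - 1)

noncomputable def nksX {n : ℕ} (σ τ : Fin n → Bool) : ℝ := 𝔼 v, nksSp (σ v) * nksSp (τ v)

noncomputable def nksE (k : ℕ) (u : ℝ) : ℝ := ((1+u)^k + (1-u)^k)/2 - 1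

lemma nks_lit {n : ℕ} (hn : 0 < n) (σ τ : Fin n → Bool) (a b : ℝ) :
    (𝔼 l : Fin n × Bool, (1 + a * nksY l σ) * (1 + b * nksY l τ)) = 1 + a * b * nksX σ τ := by
  have : Nonempty (Fin n) := ⟨⟨0, hn⟩⟩
  have h := Finset.expect_product' (univ : Finset (Fin n)) (univ : Finset Bool)
    (fun v s => (1 + a * nksY (v,s) σ) * (1 + b * nksY (v,s) τ))
  have h' : (𝔼 l : Fin n × Bool, (1 + a * nksY l σ) * (1 + b * nksY l τ)) =
    𝔼 v, 𝔼 s, (1 + a * nksY (v,s) σ) * (1 + b * nksY (v,s) τ) := h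
  rw [h']
  have : ∀ v, (𝔼 s, (1 + a * nksY (v,s) σ) * (1 + b * nksY (v,s) τ)) = 1 + a * b * (nksSp (σ v) * nksSp (τ v)) := by
    intro v
    rw [Fintype.expect_eq_sum_div_card]
    simp [nksY, nksSp]
    cases σ v <;> cases τ v <;> simp <;> ring
  simp only [this]
  rw [Finset.expect_add_distrib, ← Finset.mul_expect, Fintype.expect_const, nksX]

lemma nks_prodavg {n : ℕ} (k : ℕ) (hn : 0 < n) (σ τ : Fin n → Bool) (a b : ℝ) :
    (𝔼 c : Fin k → Fin n × Bool, (∏ i, (1 + a * nksY (c i) σ)) * ∏ i, (1 + b * nksY (c i) τ))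
      = (1 + a * b * nksX σ τ)^k := by
  have : Nonempty (Fin n) := ⟨⟨0, hn⟩⟩
  simp only [← Finset.prod_mul_distrib]
  rw [nks_expect_prod k (fun l => (1 + a * nksY l σ) * (1 + b * nksY l τ)), nks_lit hn]

lemma nks_prodavg1 {n : ℕ} (k : ℕ) (hn : 0 < n) (σ : Fin n → Bool) (a : ℝ) :
    (𝔼 c : Fin k → Fin n × Bool, (∏ i, (1 + a * nksY (c i) σ))) = 1 := by
  have := nks_prodavg k hn σ σ a 0
  simpa using this

lemma nks_W_mean {n : ℕ} (k : ℕ) (hn : 0 < n) (σ : Fin n → Bool) (γ θ : ℝ) :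
    (𝔼 c, nksW k n γ θ c σ) = 1 := by
  have : Nonempty (Fin n) := ⟨⟨0, hn⟩⟩
  unfold nksW
  rw [Finset.expect_sub_distrib, ← Finset.mul_expect, Finset.expect_sub_distrib, ← Finset.expect_div, Finset.expect_add_distrib,
    nks_prodavg1 k hn, nks_prodavg1 k hn]
  simp

lemma nks_kernel {n : ℕ} (k : ℕ) (hn : 0 < n) (σ τ : Fin n → Bool) (γ θ γ' θ' : ℝ) :
    nksK (nksW k n γ θ) (nksW k n γ' θ') σ τ = 1 + γ * γ' * nksE k (θ * θ' * nksX σ τ) := by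
  have : Nonempty (Fin n) := ⟨⟨0, hn⟩⟩
  unfold nksK
  have h : ∀ c : Fin k → Fin n × Bool, nksW k n γ θ c σ * nksW k n γ' θ' c τ =
     (1 + γ) * (1+γ') - (1+γ') * γ / 2 * (∏ i, (1 + θ * nksY (c i) σ)) - (1+γ') * γ / 2 * (∏ i, (1 + (-θ) * nksY (c i) σ))
      - (1+γ) * γ' / 2 * (∏ i, (1 + θ' * nksY (c i) τ)) - (1+γ) * γ' / 2 * (∏ i, (1 + (-θ') * nksY (c i) τ))
      + γ * γ' / 4 * ((∏ i, (1 + θ * nksY (c i) σ)) * (∏ i, (1 + θ' * nksY (c i) τ)))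
      + γ * γ' / 4 * ((∏ i, (1 + θ * nksY (c i) σ)) * (∏ i, (1 + (-θ') * nksY (c i) τ)))
      + γ * γ' / 4 * ((∏ i, (1 + (-θ) * nksY (c i) σ)) * (∏ i, (1 + θ' * nksY (c i) τ)))
      + γ * γ' / 4 * ((∏ i, (1 + (-θ) * nksY (c i) σ)) * (∏ i, (1 + (-θ') * nksY (c i) τ))) := by
    intro c; unfold nksW; ring
  simp only [h]
  simp only [Finset.expect_add_distrib, Finset.expect_sub_distrib, ← Finset.mul_expect, nks_prodavg k hn, nks_prodavg1 k hn,
    Fintype.expect_const]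
  unfold nksE
  ring

noncomputable def nksZ {n : ℕ} (z : Fin n → Bool) : ℝ := 𝔼 v, nksSp (z v)

lemma nks_avg_pair {n : ℕ} (g : ℝ → ℝ) :
    (𝔼 σ : Fin n → Bool, 𝔼 τ : Fin n → Bool, g (nksX σ τ)) = 𝔼 z : Fin n → Bool, g (nksZ z) := by
  have : ∀ σ : Fin n → Bool, (𝔼 τ : Fin n → Bool, g (nksX σ τ)) = 𝔼 z : Fin n → Bool, g (nksZ z) := by
    intro σ
    refine Fintype.expect_bijective (fun τ v => σ v == τ v) ?_ _ _ ?_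
    · rw [Fintype.bijective_iff_injective_and_card]
      refine ⟨?_, rfl⟩
      intro τ τ' h
      ext v
      have := congrFun h v
      revert this
      simp only
      cases σ v <;> cases τ v <;> cases τ' v <;> simp
    · intro τ
      congr 1
      unfold nksX nksZ
      simp only [nksSp_mul]
  simp only [this]
  exact Fintype.expect_const _

lemma nks_Y_cases {n : ℕ} (l : Fin n × Bool) (σ : Fin n → Bool) : nksY l σ = 1 ∨ nksY l σ = -1 := by
  unfold nksY; rw [nksSp_mul]; exact nksSp_cases _

lemma nks_prod_le {n k : ℕ} (θ : ℝ) (hθ0 : |θ| ≤ 1) (hθ : k * |θ| ≤ 1) (c : Fin k → Fin n × Bool) (σ : Fin n → Bool) :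
    ∏ i, (1 + θ * nksY (c i) σ) ≤ 3 := by
  have h1 : ∏ i, (1 + θ * nksY (c i) σ) ≤ ∏ i : Fin k, Real.exp |θ| := by
    apply Finset.prod_le_prod
    · intro i _
      have := abs_le.1 hθ0
      rcases nks_Y_cases (c i) σ with h | h <;> rw [h] <;> linarith
    · intro i _
      have := Real.add_one_le_exp |θ|
      have h2 := le_abs_self θ
      have h3 := neg_abs_le θ
      rcases nks_Y_cases (c i) σ with h | h <;> rw [h] <;> linarith
  refine h1.trans ?_
  rw [Finset.prod_const, ← Real.exp_nat_mul]
  have := Real.exp_one_lt_d9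
  have h4 : Real.exp (k * |θ|) ≤ Real.exp 1 := Real.exp_le_exp.2 hθ
  simp only [card_univ, Fintype.card_fin]
  linarith

lemma nks_W_lower {n k : ℕ} (γ θ : ℝ) (hγ : 0 ≤ γ) (hγ1 : γ ≤ 1/8) (hθ0 : |θ| ≤ 1) (hθ : k * |θ| ≤ 1)
    (c : Fin k → Fin n × Bool) (σ : Fin n → Bool) : 3/4 ≤ nksW k n γ θ c σ := by
  have h1 := nks_prod_le θ hθ0 hθ c σ
  have h2 := nks_prod_le (-θ) (by simpa using hθ0) (by simpa using hθ) c σ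
  unfold nksW
  nlinarith

lemma nks_W_zero {n k : ℕ} (hk : 2 ≤ k) (c : Fin k → Fin n × Bool) (σ : Fin n → Bool)
    (h : (∀ i, nksY (c i) σ = 1) ∨ (∀ i, nksY (c i) σ = -1)) :
    nksW k n (1 / (2^(k-1) - 1)) 1 c σ = 0 := by
  obtain ⟨j, rfl⟩ : ∃ j, k = j + 2 := ⟨k - 2, by omega⟩
  have h2 : (1:ℝ) < 2^(j+1) := one_lt_pow₀ (by norm_num) (by omega)
  have h3 : (2:ℝ)^(j+1) - 1 ≠ 0 := by linarith
  unfold nksW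
  rcases h with h | h <;> simp only [h] <;> norm_num <;> field_simp <;> ring
end

section
open scoped BigOperators
open Finset

lemma nks_gauss (a : ℝ) : (∫ u : ℝ, Real.exp (-u^2 + u * a)) = Real.sqrt Real.pi * Real.exp (a^2/4) ∧
    MeasureTheory.Integrable (fun u : ℝ => Real.exp (-u^2 + u * a)) := by
  have h : ∀ u : ℝ, Real.exp (-u^2 + u * a) = Real.exp (-1 * (u - a/2)^2) * Real.exp (a^2/4) := by
    intro u; rw [← Real.exp_add]; congr 1; ring
  simp only [h]
  constructor
  · rw [MeasureTheory.integral_mul_const, MeasureTheory.integral_sub_right_eq_self (fun u : ℝ => Real.exp (-1 * u^2)), integral_gaussian]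
    simp
  · apply MeasureTheory.Integrable.mul_const
    exact (integrable_exp_neg_mul_sq (b := 1) one_pos).comp_sub_right (a/2)

lemma nks_subgauss {n : ℕ} (hn : 0 < n) : (𝔼 z : Fin n → Bool, Real.exp (n * (nksZ z)^2 / 4)) ≤ 2 := by
  have hnr : (0:ℝ) < n := by exact_mod_cast hn
  have hsq : Real.sqrt n ^ 2 = n := Real.sq_sqrt hnr.le
  have hs0 : 0 < Real.sqrt n := Real.sqrt_pos.2 hnr
  set A : (Fin n → Bool) → ℝ := fun z => Real.sqrt n * nksZ z with hA
  have hA2 : ∀ z, Real.exp (n * (nksZ z)^2 / 4) = Real.exp ((A z)^2/4) := by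
    intro z; rw [hA]; simp only; rw [mul_pow, hsq]
  have hAs : ∀ z, A z = ∑ v, nksSp (z v) / Real.sqrt n := by
    intro z
    rw [hA]; simp only [nksZ]
    rw [Fintype.expect_eq_sum_div_card, ← Finset.sum_div, Fintype.card_fin]
    field_simp
    rw [hsq]; ring
  have hmgf : ∀ u : ℝ, (𝔼 z : Fin n → Bool, Real.exp (u * A z)) ≤ Real.exp (u^2/2) := by
    intro u
    have h1 : ∀ z, Real.exp (u * A z) = ∏ v, Real.exp (u * (nksSp (z v) / Real.sqrt n)) := by
      intro z; rw [hAs, Finset.mul_sum, Real.exp_sum]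
    simp only [h1]
    rw [nks_expect_prod n (fun b => Real.exp (u * (nksSp b / Real.sqrt n)))]
    have h2 : (𝔼 b, Real.exp (u * (nksSp b / Real.sqrt n))) = Real.cosh (u / Real.sqrt n) := by
      rw [Fintype.expect_eq_sum_div_card, Real.cosh_eq]
      simp [nksSp]
      congr 3
      ring
    rw [h2]
    calc Real.cosh (u / Real.sqrt n) ^ n ≤ Real.exp ((u / Real.sqrt n)^2/2) ^ n :=
          pow_le_pow_left₀ (Real.cosh_pos _).le (Real.cosh_le_exp_half_sq _) n
      _ = Real.exp (u^2/2) := by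
        rw [← Real.exp_nat_mul, div_pow, hsq]; congr 1; field_simp
  have hpi : 0 < Real.sqrt Real.pi := Real.sqrt_pos.2 Real.pi_pos
  have hint : Real.sqrt Real.pi * (𝔼 z : Fin n → Bool, Real.exp ((A z)^2/4)) = ∫ u : ℝ, 𝔼 z : Fin n → Bool, Real.exp (-u^2 + u * A z) := by
    simp only [Fintype.expect_eq_sum_div_card]
    rw [MeasureTheory.integral_div, MeasureTheory.integral_finsetSum]
    · simp only [(nks_gauss _).1]
      rw [← Finset.mul_sum]; ring
    · intro z _; exact (nks_gauss _).2
  have hint2 : MeasureTheory.Integrable (fun u : ℝ => 𝔼 z : Fin n → Bool, Real.exp (-u^2 + u * A z)) := by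
    simp only [Fintype.expect_eq_sum_div_card]
    apply MeasureTheory.Integrable.div_const
    exact MeasureTheory.integrable_finsetSum _ fun z _ => (nks_gauss _).2
  have hle : (∫ u : ℝ, 𝔼 z : Fin n → Bool, Real.exp (-u^2 + u * A z)) ≤ ∫ u : ℝ, Real.exp (-(1/2) * u^2) := by
    apply MeasureTheory.integral_mono hint2 (integrable_exp_neg_mul_sq (by norm_num))
    intro u
    simp only [Real.exp_add]
    rw [← Finset.mul_expect]
    calc _ ≤ Real.exp (-u^2) * Real.exp (u^2/2) := mul_le_mul_of_nonneg_left (hmgf u) (Real.exp_pos _).le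
      _ = _ := by rw [← Real.exp_add]; congr 1; ring
  rw [integral_gaussian, ← hint] at hle
  simp only [hA2]
  have : Real.sqrt (Real.pi / (1/2)) ≤ Real.sqrt Real.pi * 2 := by
    rw [Real.sqrt_le_left (by positivity), mul_pow, Real.sq_sqrt Real.pi_pos.le]
    linarith [Real.pi_pos]
  exact le_of_mul_le_mul_left (hle.trans this) hpi

lemma nks_choose_le {n j : ℕ} (hn : 0 < n) (hj : j ≤ n) :
    (n.choose j : ℝ) ≤ Real.exp (n * Real.binEntropy (j / n)) := by
  have hnr : (0:ℝ) < n := by exact_mod_cast hn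
  rcases Nat.eq_zero_or_pos j with h0 | h0
  · subst h0; simp
  rcases eq_or_lt_of_le hj with h1 | h1
  · subst h1; simp [hnr.ne']
  set p : ℝ := j / n with hp
  have hjr : (0:ℝ) < j := by exact_mod_cast h0
  have hjn : (j:ℝ) < n := by exact_mod_cast h1
  have hp0 : 0 < p := div_pos hjr hnr
  have hp1 : 0 < 1 - p := by rw [sub_pos, hp, div_lt_one hnr]; exact hjn
  have hsum : (n.choose j : ℝ) * (p^j * (1-p)^(n-j)) ≤ 1 := by
    have h := add_pow p (1-p) n
    rw [add_sub_cancel, one_pow] at h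
    have := Finset.single_le_sum (f := fun i => p^i * (1-p)^(n-i) * (n.choose i : ℝ)) (s := range (n+1))
      (fun i _ => by positivity) (mem_range.2 (Nat.lt_succ_of_le hj))
    rw [← h] at this
    linarith
  have hexp : p^j * (1-p)^(n-j) = Real.exp (-(n * Real.binEntropy p)) := by
    have e1 : p^j = Real.exp (j * Real.log p) := by rw [Real.exp_nat_mul, Real.exp_log hp0]
    have e2 : (1-p)^(n-j) = Real.exp (((n-j:ℕ):ℝ) * Real.log (1-p)) := by rw [Real.exp_nat_mul, Real.exp_log hp1]
    rw [e1, e2, ← Real.exp_add]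
    congr 1
    rw [Real.binEntropy_eq_negMulLog_add_negMulLog_one_sub, Real.negMulLog, Real.negMulLog, Nat.cast_sub hj]
    have : (j:ℝ) = n * p := by rw [hp]; field_simp
    rw [this]; ring
  rw [hexp, Real.exp_neg, ← div_eq_mul_inv, div_le_one (Real.exp_pos _)] at hsum
  exact hsum

lemma nks_large {n : ℕ} (hn : 0 < n) (g : ℝ → ℝ) (gap : ℝ)
    (hg : ∀ x, -1 ≤ x → x ≤ 1 → g x ≤ Real.exp (n * (Real.log 2 - Real.binEntropy ((1+x)/2) - gap))) :
    (𝔼 z : Fin n → Bool, g (nksZ z)) ≤ (n+1) * Real.exp (-(gap * n)) := by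
  have hnr : (0:ℝ) < n := by exact_mod_cast hn
  have hZ : ∀ z : Fin n → Bool, nksZ z = 2 * ((univ.filter fun v => z v = true).card / n) - 1 := by
    intro z
    unfold nksZ
    rw [Fintype.expect_eq_sum_div_card, Fintype.card_fin]
    have : ∀ v, nksSp (z v) = 2 * (if z v = true then 1 else 0) - 1 := by
      intro v; unfold nksSp; split_ifs <;> norm_num
    simp only [this, Finset.sum_sub_distrib, ← Finset.mul_sum, Finset.sum_boole]
    simp; field_simp
  rw [Fintype.expect_eq_sum_div_card]
  have hsum : (∑ z : Fin n → Bool, g (nksZ z)) = ∑ j ∈ range (n+1), (n.choose j : ℝ) * g (2 * (j/n) - 1) := by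
    simp only [hZ]
    have h1 : (∑ z : Fin n → Bool, g (2 * ((univ.filter fun v => z v = true).card / n) - 1)) =
        ∑ s : Finset (Fin n), g (2 * ((s.card:ℝ) / n) - 1) := by
      refine Fintype.sum_bijective (fun z : Fin n → Bool => univ.filter fun v => z v = true) ?_ _ _ (fun z => rfl)
      rw [Fintype.bijective_iff_injective_and_card]
      refine ⟨?_, by simp⟩
      intro z z' h
      ext v
      have := congrArg (fun s => v ∈ s) h
      simp at this
      cases hz : z v <;> cases hz' : z' v <;> simp_all
    rw [h1]
    have := Finset.sum_powerset_apply_card (fun j => g (2 * ((j:ℝ) / n) - 1)) (x := (univ : Finset (Fin n)))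
    simp only [powerset_univ, card_univ, Fintype.card_fin, nsmul_eq_mul] at this
    exact this
  rw [hsum]
  have hcard : (Fintype.card (Fin n → Bool) : ℝ) = Real.exp (n * Real.log 2) := by
    rw [Real.exp_nat_mul, Real.exp_log (by norm_num)]; simp
  rw [hcard, div_le_iff₀ (Real.exp_pos _)]
  have hterm : ∀ j ∈ range (n+1), (n.choose j : ℝ) * g (2 * (j/n) - 1) ≤ Real.exp (-(gap * n)) * Real.exp (n * Real.log 2) := by
    intro j hj
    have hj' : j ≤ n := Nat.lt_succ_iff.1 (mem_range.1 hj)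
    have hjr : (j:ℝ)/n ≤ 1 := by rw [div_le_one hnr]; exact_mod_cast hj'
    have hj0 : (0:ℝ) ≤ (j:ℝ)/n := by positivity
    have h1 := hg (2 * (j/n) - 1) (by linarith) (by linarith)
    rw [show (1 + (2 * ((j:ℝ)/n) - 1))/2 = j/n by ring] at h1
    have h2 := nks_choose_le hn hj'
    calc (n.choose j : ℝ) * g (2 * (j/n) - 1) ≤ (n.choose j : ℝ) * Real.exp (n * (Real.log 2 - Real.binEntropy (j/n) - gap)) :=
          mul_le_mul_of_nonneg_left h1 (by positivity)
      _ ≤ Real.exp (n * Real.binEntropy (j / n)) * Real.exp (n * (Real.log 2 - Real.binEntropy (j/n) - gap)) :=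
          mul_le_mul_of_nonneg_right h2 (Real.exp_pos _).le
      _ = _ := by rw [← Real.exp_add, ← Real.exp_add]; congr 1; ring
  refine (Finset.sum_le_sum hterm).trans ?_
  simp
  linarith
end

section
open scoped BigOperators
open Finset

lemma nks_E_nonneg (k : ℕ) {u : ℝ} (h1 : -1 ≤ u) (h2 : u ≤ 1) : 0 ≤ nksE k u := by
  have a := one_add_mul_le_pow (show (-2:ℝ) ≤ u by linarith) k
  have b := one_add_mul_le_pow (show (-2:ℝ) ≤ -u by linarith) k
  unfold nksE
  rw [show (1:ℝ) - u = 1 + -u by ring]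
  linarith

lemma nks_E_even (k : ℕ) (u : ℝ) : nksE k (-u) = nksE k u := by
  unfold nksE; rw [sub_neg_eq_add, ← sub_eq_add_neg]; ring

lemma nks_H_tangent {ε : ℝ} (h0 : 0 ≤ ε) (h1 : ε < 1) (s : ℝ) :
    Real.binEntropy ε ≤ ε * s + Real.exp (-s) := by
  rw [Real.binEntropy_eq_negMulLog_add_negMulLog_one_sub]
  have hb : Real.negMulLog (1-ε) ≤ ε := by
    unfold Real.negMulLog
    have := Real.one_sub_inv_le_log_of_pos (show 0 < 1 - ε by linarith)
    have h2 := mul_le_mul_of_nonneg_left this (show 0 ≤ 1 - ε by linarith)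
    have h3 : (1-ε) * (1 - (1-ε)⁻¹) = -ε := by
      have : 1 - ε ≠ 0 := by linarith
      field_simp; ring
    linarith
  rcases eq_or_lt_of_le h0 with h | h
  · subst h; simp [Real.exp_nonneg]
  have ha : Real.negMulLog ε ≤ ε * s + Real.exp (-s) - ε := by
    unfold Real.negMulLog
    have := Real.log_le_sub_one_of_pos (show 0 < Real.exp (-s) / ε by positivity)
    rw [Real.log_div (Real.exp_pos _).ne' h.ne', Real.log_exp] at this
    have h2 := mul_le_mul_of_nonneg_left this h0
    have h3 : ε * (Real.exp (-s) / ε - 1) = Real.exp (-s) - ε := by field_simp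
    linarith
  linarith

lemma nks_pinsker {ε : ℝ} (h0 : 0 < ε) (h1 : ε < 1) :
    Real.binEntropy ε ≤ Real.log 2 - (1 - 2*ε)^2/4 := by
  have key : ∀ p : ℝ, 0 < p → Real.negMulLog p ≤ p * Real.log 2 + 2 * (Real.sqrt (p/2) - p) := by
    intro p hp
    have hs : 0 < Real.sqrt (p/2) := Real.sqrt_pos.2 (by linarith)
    have hs2 : Real.sqrt (p/2)^2 = p/2 := Real.sq_sqrt (by linarith)
    have := Real.one_sub_inv_le_log_of_pos (show 0 < 2 * Real.sqrt (p/2) by positivity)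
    have hl : Real.log p = 2 * Real.log (2 * Real.sqrt (p/2)) - Real.log 2 := by
      have e : p = (2 * Real.sqrt (p/2))^2 / 2 := by rw [mul_pow, hs2]; ring
      conv_lhs => rw [e]
      rw [Real.log_div (by positivity) (by norm_num), Real.log_pow]; push_cast; ring
    unfold Real.negMulLog
    rw [hl]
    have h2 := mul_le_mul_of_nonneg_left this hp.le
    have h3 : p * (1 - (2 * Real.sqrt (p/2))⁻¹) = p - Real.sqrt (p/2) := by
      have : p = 2 * Real.sqrt (p/2)^2 := by rw [hs2]; ring
      have h4 : (2 * Real.sqrt (p/2)^2) * (2 * Real.sqrt (p/2))⁻¹ = Real.sqrt (p/2) := by field_simp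
      calc p * (1 - (2 * Real.sqrt (p/2))⁻¹) = p - p * (2 * Real.sqrt (p/2))⁻¹ := by ring
        _ = p - (2 * Real.sqrt (p/2)^2) * (2 * Real.sqrt (p/2))⁻¹ := by rw [← this]
        _ = _ := by rw [h4]
    linarith
  rw [Real.binEntropy_eq_negMulLog_add_negMulLog_one_sub]
  have k1 := key ε h0
  have k2 := key (1-ε) (by linarith)
  set a := Real.sqrt (ε/2) with ha
  set b := Real.sqrt ((1-ε)/2) with hb
  have ha2 : a^2 = ε/2 := Real.sq_sqrt (by linarith)
  have hb2 : b^2 = (1-ε)/2 := Real.sq_sqrt (by linarith)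
  have ha0 : 0 ≤ a := Real.sqrt_nonneg _
  have hb0 : 0 ≤ b := Real.sqrt_nonneg _
  -- a + b ≤ 1 - (1-2ε)^2/8
  have hab : 2 * (a * b) ≤ 1/2 - (1-2*ε)^2/4 := by
    have h2 : (2*(a*b))^2 = ε*(1-ε) := by
      calc (2*(a*b))^2 = 4 * a^2 * b^2 := by ring
        _ = _ := by rw [ha2, hb2]; ring
    have h4 : (1-2*ε)^2 ≤ 1 := by nlinarith
    apply le_of_sq_le_sq _ (by linarith)
    rw [h2]; nlinarith [sq_nonneg ((1-2*ε)^2)]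
  have hsum : a + b ≤ 1 - (1-2*ε)^2/8 := by
    have h4 : (1-2*ε)^2 ≤ 1 := by nlinarith
    apply le_of_sq_le_sq _ (by linarith)
    nlinarith [sq_nonneg ((1-2*ε)^2)]
  linarith

lemma nks_two_pow_step {y : ℝ} (hy : 400 ≤ y) : 16 * (y+1)^4 ≤ 2 * (16 * y^4) := by
  have e3 : 400 * y ≤ y^2 := by nlinarith
  have e2 : 400 * y^2 ≤ y^3 := by nlinarith [sq_nonneg y]
  have e1 : 400 * y^3 ≤ y^4 := by nlinarith [pow_pos (show 0 < y by linarith) 3]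
  have h : (y+1)^4 = y^4 + 4*y^3 + 6*y^2 + 4*y + 1 := by ring
  rw [h]
  linarith

lemma nks_two_pow {k : ℕ} (hk : 400 ≤ k) : 16 * (k:ℝ)^4 ≤ 2^(k-1) := by
  induction k, hk using Nat.le_induction with
  | base =>
    have : (2:ℝ)^40 ≤ 2^(400-1) := pow_le_pow_right₀ (by norm_num) (by norm_num)
    refine le_trans ?_ this
    norm_num
  | succ k hk ih =>
    have := nks_two_pow_step (y := (k:ℝ)) (by exact_mod_cast hk)
    have e : (2:ℝ)^(k+1-1) = 2 * 2^(k-1) := by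
      rw [← pow_succ']; congr 1; omega
    rw [e]; push_cast; linarith

lemma nks_exp_big {y : ℝ} (hy : 40 ≤ y) : 4000 * y^2 ≤ Real.exp y := by
  have h := Real.pow_div_factorial_le_exp y (by linarith) 8
  have : 4000 * y^2 ≤ y^8 / (Nat.factorial 8 : ℝ) := by
    have hf : (Nat.factorial 8 : ℝ) = 40320 := by norm_num [Nat.factorial]
    rw [hf, le_div_iff₀ (by norm_num)]
    have h6 : (40:ℝ)^6 ≤ y^6 := pow_le_pow_left₀ (by norm_num) hy 6
    have : y^8 = y^6 * y^2 := by ring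
    rw [this]
    nlinarith [sq_nonneg y]
  linarith

lemma nks_a_bound {k : ℕ} (hk : 400 ≤ k) {ε : ℝ} (h0 : 0 ≤ ε) (h1 : ε ≤ 1/2) : (1-ε)^k ≤ Real.exp (-(k*ε)) ∧ ε^k ≤ ε^2 := by
  constructor
  · have : 1 - ε ≤ Real.exp (-ε) := Real.one_sub_le_exp_neg ε
    calc (1-ε)^k ≤ (Real.exp (-ε))^k := pow_le_pow_left₀ (by linarith) this k
      _ = _ := by rw [← Real.exp_nat_mul]; congr 1; ring
  · exact pow_le_pow_of_le_one h0 (by linarith) (by omega)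

lemma nks_exp_quad {y : ℝ} (hy : 0 ≤ y) : Real.exp (-y) ≤ 1 - y + y^2/2 := by
  have h := Real.quadratic_le_exp_of_nonneg hy
  rw [Real.exp_neg, inv_le_comm₀ (Real.exp_pos _) (by nlinarith [sq_nonneg (y-1)])]
  refine le_trans ?_ h
  rw [inv_le_iff_one_le_mul₀ (by nlinarith [sq_nonneg (y-1)])]
  nlinarith [sq_nonneg (y^2), sq_nonneg y]
end

section
open scoped BigOperators
open Finset

set_option maxHeartbeats 1600000 in
lemma nks_reg1 {k : ℕ} (hk : 400 ≤ k) {N R a ε L : ℝ} (hN : N = 2^(k-1)) (hN4 : 16 * (k:ℝ)^4 ≤ N) (hL : L = Real.log 2)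
    (hR : R = N * L - L/2 - (1 + 8/(k:ℝ))/2)
    (ha : a = (1-ε)^k + ε^k) (h0 : 0 ≤ ε) (h1 : ε ≤ 1/(k:ℝ)^3) :
    R * Real.log (1 + (1/(N-1))^2 * (N * a - 1)) < L - Real.binEntropy ε := by
  have hkr : (400:ℝ) ≤ k := by exact_mod_cast hk
  have hk0 : (0:ℝ) < k := by linarith
  have hk3 : (400:ℝ)^3 ≤ (k:ℝ)^3 := pow_le_pow_left₀ (by norm_num) hkr 3
  have hk4 : (400:ℝ)^4 ≤ (k:ℝ)^4 := pow_le_pow_left₀ (by norm_num) hkr 4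
  have hL1 : 0.69 < L := by rw [hL]; linarith [Real.log_two_gt_d9]
  have hL2 : L < 0.7 := by rw [hL]; linarith [Real.log_two_lt_d9]
  have hN1 : 1000 < N := by norm_num at hk4; linarith
  have hε1 : ε ≤ 1/2 := by
    refine h1.trans ?_
    rw [div_le_div_iff₀ (by positivity) (by norm_num)]; norm_num at hk3; linarith
  have hkε : (k:ℝ)^2 * ε ≤ 1/k := by
    calc (k:ℝ)^2 * ε ≤ (k:ℝ)^2 * (1/(k:ℝ)^3) := by gcongr
      _ = 1/(k:ℝ) := by field_simp
  obtain ⟨b1, b2⟩ := nks_a_bound hk h0 hε1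
  have b3 := nks_exp_quad (show 0 ≤ k * ε by positivity)
  -- 1 - a lower
  have hε2 : ε^2 ≤ ((k:ℝ)*ε)^2/2 := by
    rw [mul_pow]
    have : 2 ≤ (k:ℝ)^2 := by
      have := pow_le_pow_left₀ (by norm_num) hkr 2
      norm_num at this; linarith
    linarith [mul_le_mul_of_nonneg_right this (sq_nonneg ε)]
  have ha1 : k * ε - ε/k ≤ 1 - a := by
    have : ((k:ℝ)*ε)^2 ≤ ε / k := by
      calc ((k:ℝ)*ε)^2 = ((k:ℝ)^2*ε) * ε := by ring
        _ ≤ (1/k) * ε := by gcongr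
        _ = ε/k := by ring
    rw [ha]; linarith
  have hεk : ε/k ≤ k * ε := by
    rw [div_le_iff₀ hk0]
    have h5 : ε * 1 ≤ ε * ((k:ℝ)*k) := mul_le_mul_of_nonneg_left (by nlinarith only [hkr]) h0
    linarith
  have ha0 : 0 ≤ 1 - a := by linarith
  set β := 1/(N-1) with hβ
  have hN1' : 0 < N - 1 := by linarith
  have hβ0 : 0 < β := by positivity
  have hu' : 1 + β^2 * (N * a - 1) = (1 + β) * (1 - β * (1-a)) := by
    rw [hβ]; field_simp; ring
  have hapos : 0 < a := by
    rw [ha]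
    have : 0 < (1-ε)^k := pow_pos (by linarith) k
    have : 0 ≤ ε^k := pow_nonneg h0 k
    linarith
  have hβ1 : β < 1 := by rw [hβ, div_lt_one hN1']; linarith
  have hpos2 : 0 < 1 - β * (1-a) := by
    have : β * (1-a) ≤ β * 1 := mul_le_mul_of_nonneg_left (by linarith) hβ0.le
    linarith
  have hlog : Real.log (1 + β^2 * (N * a - 1)) ≤ Real.log (1+β) - β * (1-a) := by
    rw [hu', Real.log_mul (by positivity) hpos2.ne']
    have := Real.log_le_sub_one_of_pos hpos2
    linarith
  -- log (1+β) bound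
  have hNi : 0 < N⁻¹ := by positivity
  have hNN : N * N⁻¹ = 1 := mul_inv_cancel₀ (by linarith)
  have hN2 : N⁻¹ ≤ 1/1000 := by rw [inv_le_comm₀ (by linarith) (by norm_num)]; norm_num; linarith
  have hlb : Real.log (1+β) ≤ N⁻¹ + (N⁻¹)^2/2 + 2*(N⁻¹)^3 := by
    have e : 1 + β = (1 - N⁻¹)⁻¹ := by rw [hβ]; field_simp; ring
    rw [e, Real.log_inv]
    have hx : |N⁻¹| < 1 := by
      rw [abs_of_pos (by positivity)]; linarith
    have := Real.abs_log_sub_add_sum_range_le hx 2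
    rw [abs_of_pos hNi] at this
    have h2 := (abs_le.1 this).1
    have h3 : (N⁻¹)^(2+1) / (1 - N⁻¹) ≤ 2*(N⁻¹)^3 := by
      rw [div_le_iff₀ (by linarith)]
      have : 0 < (N⁻¹)^3 := by positivity
      nlinarith only [this, hN2]
    simp only [Finset.sum_range_succ, Finset.sum_range_zero] at h2
    norm_num at h2 h3 ⊢
    linarith
  have ht0 : 0 < 8/(k:ℝ) := by positivity
  have ht1 : 8/(k:ℝ) ≤ 1 := by rw [div_le_one hk0]; linarith
  have hR2 : N * L - 2 ≤ R := by rw [hR]; linarith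
  have hR0 : 0 < R := by
    have : 1000 * 0.69 ≤ N * L := by gcongr
    norm_num at this
    linarith
  have hRlog : R * Real.log (1+β) ≤ L - (1+8/(k:ℝ))/2 * N⁻¹ + 2 * (N⁻¹)^2 := by
    calc R * Real.log (1+β) ≤ R * (N⁻¹ + (N⁻¹)^2/2 + 2*(N⁻¹)^3) := by gcongr
      _ = L * (N * N⁻¹) + L/2*N⁻¹*(N*N⁻¹) + 2*L*(N⁻¹)^2*(N*N⁻¹) - (L/2 + (1 + 8/(k:ℝ))/2) * N⁻¹
          - (L/2 + (1 + 8/(k:ℝ))/2)*((N⁻¹)^2/2 + 2*(N⁻¹)^3) := by rw [hR]; ring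
      _ ≤ _ := by
        rw [hNN]
        have : 0 ≤ (L/2 + (1 + 8/(k:ℝ))/2)*((N⁻¹)^2/2 + 2*(N⁻¹)^3) := by positivity
        have h5 : 0 < (N⁻¹)^2 := by positivity
        have h6 : 2*L*(N⁻¹)^2 ≤ 2*1*(N⁻¹)^2 := by gcongr; linarith
        linarith
  have hRβ : L - 2 * N⁻¹ ≤ R * β := by
    have h5 : N⁻¹ ≤ β := by
      rw [hβ, one_div]; apply inv_anti₀ hN1'; linarith
    calc L - 2 * N⁻¹ = L * (N * N⁻¹) - 2 * N⁻¹ := by rw [hNN]; ring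
      _ = (N*L - 2) * N⁻¹ := by ring
      _ ≤ R * N⁻¹ := by gcongr
      _ ≤ R * β := by gcongr
  have hkN : 2 * N⁻¹ * k ≤ 1/(k:ℝ) := by
    rw [le_div_iff₀ hk0]
    have : 2 * (k:ℝ)^2 ≤ N := by nlinarith only [sq_nonneg ((k:ℝ)^2 - 1), hN4, hkr]
    calc 2 * N⁻¹ * k * k = (2*(k:ℝ)^2) * N⁻¹ := by ring
      _ ≤ N * N⁻¹ := by gcongr
      _ = 1 := hNN
  have hmain : k * L * ε - 1.7 * (ε/k) ≤ R * β * (1-a) := by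
    have hp : 0 ≤ L - 2*N⁻¹ := by linarith
    have hd : 0 ≤ k * ε - ε/k := by linarith
    have hq : 0 ≤ ε/k := by positivity
    calc k * L * ε - 1.7 * (ε/k) ≤ (L - 2*N⁻¹) * (k * ε - ε/k) := by
          have h6 : 2 * N⁻¹ * k * ε ≤ 1/(k:ℝ) * ε := by gcongr
          have h7 : 1/(k:ℝ) * ε = ε/k := by ring
          have h8 : L * (ε/k) ≤ 0.7 * (ε/k) := by gcongr
          have h9 : 0 ≤ 2 * N⁻¹ * (ε/k) := by positivity
          have h10 : (L - 2*N⁻¹) * (k * ε - ε/k) = k*L*ε - L*(ε/k) - 2*N⁻¹*k*ε + 2*N⁻¹*(ε/k) := by ring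
          linarith
      _ ≤ R * β * (1-a) := by gcongr
  have hH := nks_H_tangent h0 (show ε < 1 by linarith) (k * L - 2/k)
  have hexp : Real.exp (-(k * L - 2/k)) ≤ (1 + 4/(k:ℝ))/2 * N⁻¹ := by
    have e1 : Real.exp (-(k * L - 2/k)) = Real.exp (2/k) * (Real.exp (k*L))⁻¹ := by
      rw [← Real.exp_neg, ← Real.exp_add]; congr 1; ring
    have e2 : Real.exp (k*L) = 2 * N := by
      rw [hL, Real.exp_nat_mul, Real.exp_log (by norm_num), hN]
      obtain ⟨j, rfl⟩ : ∃ j, k = j + 1 := ⟨k-1, by omega⟩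
      simp [pow_succ]; ring
    have e3 : Real.exp (2/(k:ℝ)) ≤ 1 + 4/k := by
      have h2k : |2/(k:ℝ)| ≤ 1 := by
        rw [abs_of_pos (by positivity), div_le_one hk0]; linarith
      have := Real.abs_exp_sub_one_le h2k
      rw [abs_of_pos (show 0 < 2/(k:ℝ) by positivity)] at this
      have h5 := (abs_le.1 this).2
      have : 2 * (2/(k:ℝ)) = 4/k := by ring
      linarith
    rw [e1, e2, mul_inv]
    calc Real.exp (2/(k:ℝ)) * (2⁻¹ * N⁻¹) ≤ (1 + 4/k) * (2⁻¹ * N⁻¹) := by gcongr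
      _ = _ := by ring
  have hfin : R * Real.log (1 + β^2 * (N * a - 1)) ≤ R * Real.log (1+β) - R * β * (1-a) := by
    calc _ ≤ R * (Real.log (1+β) - β * (1-a)) := by gcongr
      _ = _ := by ring
  have hs1 : ε * (k * L - 2/k) = k * L * ε - 2 * (ε/k) := by ring
  have hq : 0 ≤ ε/k := by positivity
  have hNk : N⁻¹ < 1/(k:ℝ) := by
    have : 2 * N⁻¹ ≤ 2 * N⁻¹ * k := by nlinarith only [hkr, hNi]
    linarith
  have hlast : 2 * (N⁻¹)^2 + (1 + 4/(k:ℝ))/2 * N⁻¹ < (1+8/(k:ℝ))/2 * N⁻¹ := by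
    have e1 : (1+8/(k:ℝ))/2 * N⁻¹ = (1 + 4/(k:ℝ))/2 * N⁻¹ + 2 * (1/(k:ℝ)) * N⁻¹ := by ring
    rw [e1]
    nlinarith only [hNk, hNi]
  linarith
end

section
open scoped BigOperators
open Finset

lemma nks_reg2 {N R a L : ℝ} (hN1 : 1000 < N) (hL0 : 0 < L)
    (hR : R ≤ N * L) (ha1 : a ≤ 1) (haN : 1 ≤ N * a) :
    R * Real.log (1 + (1/(N-1))^2 * (N * a - 1)) ≤ L * (a + 2/N) := by
  have hN1' : 0 < N - 1 := by linarith
  have hu : 0 ≤ (1/(N-1))^2 * (N * a - 1) := by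
    apply mul_nonneg (by positivity); linarith
  have hlog0 : 0 ≤ Real.log (1 + (1/(N-1))^2 * (N * a - 1)) := Real.log_nonneg (by linarith)
  have hlog : Real.log (1 + (1/(N-1))^2 * (N * a - 1)) ≤ (1/(N-1))^2 * (N * a - 1) := by
    have := Real.log_le_sub_one_of_pos (show 0 < 1 + (1/(N-1))^2 * (N * a - 1) by linarith)
    linarith
  have hkey : N * ((1/(N-1))^2 * (N * a - 1)) ≤ a + 2/N := by
    have e : N * ((1/(N-1))^2 * (N * a - 1)) = (N * (N * a - 1)) / (N-1)^2 := by field_simp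
    rw [e, div_le_iff₀ (by positivity)]
    have e2 : (a + 2/N) * (N-1)^2 = a*N^2 - 2*a*N + a + 2*N - 4 + 2/N := by field_simp; ring
    rw [e2]
    have : 0 < 2/N := by positivity
    have : a * N ≤ 1 * N := by gcongr
    nlinarith only [this, hN1, haN, ‹0 < 2/N›]
  calc R * Real.log (1 + (1/(N-1))^2 * (N * a - 1)) ≤ (N*L) * ((1/(N-1))^2 * (N * a - 1)) := by
        calc _ ≤ (N*L) * Real.log (1 + (1/(N-1))^2 * (N * a - 1)) := by gcongr
          _ ≤ _ := by gcongr
    _ = L * (N * ((1/(N-1))^2 * (N * a - 1))) := by ring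
    _ ≤ _ := by gcongr

lemma nks_reg2a {k : ℕ} (hk : 400 ≤ k) {N a ε L : ℝ} (hN4 : 16 * (k:ℝ)^4 ≤ N) (hL : L = Real.log 2)
    (ha : a = (1-ε)^k + ε^k) (h0 : 1/(k:ℝ)^3 ≤ ε) (h1 : ε ≤ 1/(k:ℝ)) :
    L * (a + 2/N) < L - Real.binEntropy ε := by
  have hkr : (400:ℝ) ≤ k := by exact_mod_cast hk
  have hk0 : (0:ℝ) < k := by linarith
  have hL1 : 0.69 < L := by rw [hL]; linarith [Real.log_two_gt_d9]
  have hL2 : L < 0.7 := by rw [hL]; linarith [Real.log_two_lt_d9]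
  have hε0 : 0 < ε := lt_of_lt_of_le (by positivity) h0
  have hkε : k * ε ≤ 1 := by rw [le_div_iff₀ hk0] at h1; linarith
  have hε1 : ε ≤ 1/400 := h1.trans (by gcongr)
  obtain ⟨b1, b2⟩ := nks_a_bound hk hε0.le (by linarith)
  have b3 := nks_exp_quad (show 0 ≤ k * ε by positivity)
  have h2 : (k*ε)^2 ≤ k * ε := by
    have : 0 ≤ k * ε := by positivity
    nlinarith only [this, hkε]
  have h3 : ε^2 ≤ 0.01 * ε := by nlinarith only [hε0, hε1]
  have h4 : 2/N ≤ ε := by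
    refine le_trans ?_ h0
    have : 0 < 16 * (k:ℝ)^4 := by positivity
    rw [div_le_div_iff₀ (by linarith) (by positivity)]
    have : 2 * (k:ℝ)^3 ≤ k * (k:ℝ)^3 := by gcongr; linarith
    nlinarith only [this, hN4, pow_pos hk0 3]
  have h5 : a + 2/N ≤ 1 - k*ε/2 + 1.01*ε := by rw [ha]; linarith
  have hH := nks_H_tangent hε0.le (by linarith) (3 * Real.log k)
  have he : Real.exp (-(3 * Real.log k)) = 1/(k:ℝ)^3 := by
    rw [Real.exp_neg, show (3:ℝ) * Real.log k = ((3:ℕ):ℝ) * Real.log k by norm_num, Real.exp_nat_mul, Real.exp_log hk0, one_div]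
  rw [he] at hH
  have hlk : Real.log k ≤ k/64 + 3.2 := by
    have := Real.log_le_sub_one_of_pos (show 0 < (k:ℝ)/64 by positivity)
    rw [Real.log_div hk0.ne' (by norm_num), show (64:ℝ) = 2^6 by norm_num, Real.log_pow, ← hL] at this
    norm_num at this
    linarith
  have h6 : L * (a + 2/N) ≤ L * (1 - k*ε/2 + 1.01*ε) := by gcongr
  have h7 : 3 * Real.log k + 1 < L * (k/2 - 1.01) := by
    have : 0.69 * ((k:ℝ)/2 - 1.01) ≤ L * (k/2 - 1.01) := by gcongr; linarith
    linarith
  have h8 := mul_lt_mul_of_pos_left h7 hε0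
  have e9 : ε * (L * (k/2 - 1.01)) = L * (k * ε/2) - L * (1.01*ε) := by ring
  have e10 : L * (1 - k*ε/2 + 1.01*ε) = L - L * (k * ε/2) + L * (1.01*ε) := by ring
  linarith

lemma nks_reg2b {k : ℕ} (hk : 400 ≤ k) {N a ε L : ℝ} (hN4 : 1000 ≤ N) (hL : L = Real.log 2)
    (ha : a = (1-ε)^k + ε^k) (h0 : 1/(k:ℝ) ≤ ε) (h1 : ε ≤ 1/10) :
    L * (a + 2/N) < L - Real.binEntropy ε := by
  have hkr : (400:ℝ) ≤ k := by exact_mod_cast hk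
  have hk0 : (0:ℝ) < k := by linarith
  have hL1 : 0.69 < L := by rw [hL]; linarith [Real.log_two_gt_d9]
  have hL2 : L < 0.7 := by rw [hL]; linarith [Real.log_two_lt_d9]
  have hε0 : 0 < ε := lt_of_lt_of_le (by positivity) h0
  have hkε : 1 ≤ k * ε := by rw [div_le_iff₀ hk0] at h0; linarith
  obtain ⟨b1, b2⟩ := nks_a_bound hk hε0.le (by linarith)
  have b3 : Real.exp (-(k*ε)) ≤ Real.exp (-1) := Real.exp_le_exp.2 (by linarith)
  have b4 : Real.exp (-1) ≤ 0.368 := by linarith [Real.exp_neg_one_lt_d9]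
  have h3 : ε^2 ≤ 0.01 := by nlinarith only [hε0, h1]
  have h4 : 2/N ≤ 0.002 := by rw [div_le_iff₀ (by linarith)]; linarith
  have h5 : a + 2/N ≤ 0.4 := by rw [ha]; linarith
  have hH := nks_H_tangent hε0.le (by linarith) 2
  have he : Real.exp (-2) ≤ 0.136 := by
    rw [show (-2:ℝ) = -1 + -1 by norm_num, Real.exp_add]
    nlinarith only [b4, Real.exp_pos (-1)]
  have h6 : L * (a + 2/N) ≤ L * 0.4 := by gcongr
  linarith

lemma nks_reg2c {k : ℕ} (hk : 400 ≤ k) {N a ε L : ℝ} (hN4 : 16 * (k:ℝ)^4 ≤ N) (hL : L = Real.log 2)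
    (ha : a = (1-ε)^k + ε^k) (h0 : 1/10 ≤ ε) (h1 : 1/(k:ℝ) ≤ 1 - 2*ε) :
    L * (a + 2/N) < L - Real.binEntropy ε := by
  have hkr : (400:ℝ) ≤ k := by exact_mod_cast hk
  have hk0 : (0:ℝ) < k := by linarith
  have hL1 : 0.69 < L := by rw [hL]; linarith [Real.log_two_gt_d9]
  have hL2 : L < 0.7 := by rw [hL]; linarith [Real.log_two_lt_d9]
  have hki : 0 < 1/(k:ℝ) := by positivity
  obtain ⟨b1, b2⟩ := nks_a_bound hk (show 0 ≤ ε by linarith) (by linarith)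
  have b3 : Real.exp (-(k*ε)) ≤ Real.exp (-(k/10)) := Real.exp_le_exp.2 (by nlinarith only [h0, hk0])
  have b4 : ε^k ≤ (1-ε)^k := pow_le_pow_left₀ (by linarith) (by linarith) k
  have b5 := nks_exp_big (show 40 ≤ (k:ℝ)/10 by linarith)
  have b6 : Real.exp (-(k/10)) ≤ (1/40) * (1/(k:ℝ))^2 := by
    rw [Real.exp_neg]
    have : (1/40) * (1/(k:ℝ))^2 = (4000 * ((k:ℝ)/10)^2)⁻¹ := by field_simp; norm_num
    rw [this]
    exact inv_anti₀ (by positivity) b5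
  have h4 : 2/N ≤ (1/20) * (1/(k:ℝ))^2 := by
    have : 0 < 16 * (k:ℝ)^4 := by positivity
    have e : (1/20) * (1/(k:ℝ))^2 = 1/(20*(k:ℝ)^2) := by field_simp
    rw [e, div_le_div_iff₀ (by linarith) (by positivity)]
    nlinarith only [sq_nonneg ((k:ℝ)^2 - 2), hN4, hkr]
  have h5 : a + 2/N ≤ (1/10) * (1/(k:ℝ))^2 := by rw [ha]; linarith
  have hH := nks_pinsker (show 0 < ε by linarith) (show ε < 1 by linarith)
  rw [← hL] at hH
  have h6 : L * (a + 2/N) ≤ 0.7 * ((1/10) * (1/(k:ℝ))^2) := by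
    calc _ ≤ L * ((1/10) * (1/(k:ℝ))^2) := by gcongr
      _ ≤ _ := by gcongr
  have h7 : (1/(k:ℝ))^2 ≤ (1-2*ε)^2 := pow_le_pow_left₀ hki.le h1 2
  have : 0 < (1/(k:ℝ))^2 := by positivity
  linarith

lemma nks_reg {k : ℕ} (hk : 400 ≤ k) {N R a ε L : ℝ} (hN : N = 2^(k-1)) (hL : L = Real.log 2)
    (hR : R = N * L - L/2 - (1 + 8/(k:ℝ))/2)
    (ha : a = (1-ε)^k + ε^k) (h0 : 0 ≤ ε) (h1 : 1/(k:ℝ) ≤ 1 - 2*ε) (haN : 1 ≤ N * a) :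
    R * Real.log (1 + (1/(N-1))^2 * (N * a - 1)) < L - Real.binEntropy ε := by
  have hN4 : 16 * (k:ℝ)^4 ≤ N := by rw [hN]; exact nks_two_pow hk
  rcases le_total ε (1/(k:ℝ)^3) with h | h
  · exact nks_reg1 hk hN hN4 hL hR ha h0 h
  have hkr : (400:ℝ) ≤ k := by exact_mod_cast hk
  have hk0 : (0:ℝ) < k := by linarith
  have hk4 : (400:ℝ)^4 ≤ (k:ℝ)^4 := pow_le_pow_left₀ (by norm_num) hkr 4
  have hN1 : 1000 < N := by norm_num at hk4; linarith
  have hL0 : 0 < L := by rw [hL]; exact Real.log_pos (by norm_num)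
  have hki : 0 < 1/(k:ℝ) := by positivity
  have ha1 : a ≤ 1 := by
    have h5 := pow_le_of_le_one h0 (show ε ≤ 1 by linarith) (show k ≠ 0 by omega)
    have h6 := pow_le_of_le_one (show 0 ≤ 1-ε by linarith) (show 1-ε ≤ 1 by linarith) (show k ≠ 0 by omega)
    rw [ha]; linarith
  have hRN : R ≤ N * L := by
    have : 0 < 8/(k:ℝ) := by positivity
    rw [hR]; linarith
  refine (nks_reg2 hN1 hL0 hRN ha1 haN).trans_lt ?_
  rcases le_total ε (1/(k:ℝ)) with h2 | h2
  · exact nks_reg2a hk hN4 hL ha h h2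
  rcases le_total ε (1/10) with h3 | h3
  · exact nks_reg2b hk hN1.le hL ha h2 h3
  · exact nks_reg2c hk hN4 hL ha h3 h1
end

section
open scoped BigOperators
open Finset

lemma nks_gap_pt {k : ℕ} (hk : 400 ≤ k) {r x : ℝ}
    (hr : r < 2^(k-1) * Real.log 2 - Real.log 2/2 - (1 + 8/(k:ℝ))/2)
    (h1 : 1/(k:ℝ) ≤ x) (h2 : x ≤ 1) :
    r * Real.log (1 + (1/(2^(k-1)-1))^2 * nksE k x) < Real.log 2 - Real.binEntropy ((1+x)/2) := by
  have hki : 0 ≤ 1/(k:ℝ) := by positivity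
  have hE := nks_E_nonneg k (show -1 ≤ x by linarith) h2
  have e : nksE k x = 2^(k-1) * ((1-(1-x)/2)^k + ((1-x)/2)^k) - 1 := by
    obtain ⟨j, rfl⟩ : ∃ j, k = j + 1 := ⟨k-1, by omega⟩
    unfold nksE
    rw [show 1 - (1-x)/2 = (1+x)/2 by ring, div_pow, div_pow]
    simp only [Nat.add_sub_cancel]
    have : (2:ℝ)^j ≠ 0 := by positivity
    field_simp
    ring
  have hb : Real.binEntropy ((1+x)/2) = Real.binEntropy ((1-x)/2) := by
    rw [← Real.binEntropy_one_sub ((1-x)/2)]; congr 1; ring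
  have := nks_reg hk (ε := (1-x)/2) rfl rfl rfl rfl (by linarith) (by linarith) (by linarith)
  rw [← e, ← hb] at this
  refine lt_of_le_of_lt ?_ this
  have h0 : 0 ≤ Real.log (1 + (1/(2^(k-1)-1))^2 * nksE k x) := by
    apply Real.log_nonneg
    have : 0 ≤ (1/((2:ℝ)^(k-1)-1))^2 * nksE k x := by positivity
    linarith
  exact mul_le_mul_of_nonneg_right hr.le h0

lemma nks_gap {k : ℕ} (hk : 400 ≤ k) {r : ℝ}
    (hr : r < 2^(k-1) * Real.log 2 - Real.log 2/2 - (1 + 8/(k:ℝ))/2) :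
    ∃ gap > 0, ∀ x, -1 ≤ x → x ≤ 1 → 1/(k:ℝ) ≤ |x| →
    r * Real.log (1 + (1/(2^(k-1)-1))^2 * nksE k x) ≤ Real.log 2 - Real.binEntropy ((1+x)/2) - gap := by
  have hkr : (400:ℝ) ≤ k := by exact_mod_cast hk
  have hpt : ∀ x, -1 ≤ x → x ≤ 1 → 1/(k:ℝ) ≤ |x| →
    r * Real.log (1 + (1/(2^(k-1)-1))^2 * nksE k x) < Real.log 2 - Real.binEntropy ((1+x)/2) := by
    intro x h1 h2 h3
    rcases le_total 0 x with h | h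
    · rw [abs_of_nonneg h] at h3
      exact nks_gap_pt hk hr h3 h2
    · rw [abs_of_nonpos h] at h3
      have := nks_gap_pt hk hr h3 (by linarith)
      rw [nks_E_even] at this
      have hb : Real.binEntropy ((1+-x)/2) = Real.binEntropy ((1+x)/2) := by
        rw [← Real.binEntropy_one_sub ((1+x)/2)]; congr 1; ring
      rwa [hb] at this
  set A : Set ℝ := Set.Icc (-1) 1 ∩ {x | 1/(k:ℝ) ≤ |x|} with hA
  have hAc : IsCompact A := isCompact_Icc.inter_right (isClosed_le continuous_const continuous_abs)
  have hAn : A.Nonempty := ⟨1, by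
    refine ⟨⟨by norm_num, le_refl _⟩, ?_⟩
    show 1/(k:ℝ) ≤ |1|
    rw [abs_one, div_le_one (by linarith)]; linarith⟩
  have hcE : Continuous (nksE k) := by unfold nksE; fun_prop
  have hcont : ContinuousOn (fun x => Real.log 2 - Real.binEntropy ((1+x)/2) -
      r * Real.log (1 + (1/(2^(k-1)-1))^2 * nksE k x)) A := by
    apply ContinuousOn.sub
    · apply Continuous.continuousOn
      apply continuous_const.sub
      exact Real.binEntropy_continuous.comp (by fun_prop)
    · apply ContinuousOn.mul continuousOn_const
      apply ContinuousOn.log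
      · apply Continuous.continuousOn; fun_prop
      · rintro x ⟨⟨h1, h2⟩, _⟩
        have hE := nks_E_nonneg k h1 h2
        have : 0 ≤ (1/((2:ℝ)^(k-1)-1))^2 * nksE k x := by positivity
        linarith
  obtain ⟨x0, hx0, hmin⟩ := hAc.exists_isMinOn hAn hcont
  have hp := hpt x0 hx0.1.1 hx0.1.2 hx0.2
  refine ⟨_, sub_pos.2 hp, ?_⟩
  intro x h1 h2 h3
  have := hmin (show x ∈ A from ⟨⟨h1, h2⟩, h3⟩)
  simp only [Set.mem_ofPred_eq] at this
  linarith

lemma nks_E_quad (k : ℕ) {u : ℝ} (h1 : -1 ≤ u) (h2 : u ≤ 1) (h : |k * u| ≤ 1) : nksE k u ≤ (k * u)^2 := by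
  have a1 : (1+u)^k ≤ Real.exp (k*u) := by
    rw [Real.exp_nat_mul]
    exact pow_le_pow_left₀ (by linarith) (by linarith [Real.add_one_le_exp u]) k
  have a2 : (1-u)^k ≤ Real.exp (-(k*u)) := by
    rw [← mul_neg, Real.exp_nat_mul]
    exact pow_le_pow_left₀ (by linarith) (by linarith [Real.add_one_le_exp (-u)]) k
  have a3 := Real.cosh_le_exp_half_sq (k*u)
  rw [Real.cosh_eq] at a3
  have hy : (k*u)^2 ≤ 1 := by rw [← sq_abs]; exact pow_le_one₀ (abs_nonneg _) h
  have a4 := Real.abs_exp_sub_one_le (x := (k*u)^2/2) (by rw [abs_of_nonneg (by positivity)]; linarith)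
  rw [abs_of_nonneg (show 0 ≤ (k*u)^2/2 by positivity)] at a4
  have := (abs_le.1 a4).2
  unfold nksE
  linarith

lemma nks_E_taylor {k : ℕ} (hk : 2 ≤ k) {u : ℝ} (h : |u| ≤ 1) :
    |nksE k u - (k.choose 2) * u^2| ≤ 2^k * u^4 := by
  set hh : ℕ → ℝ := fun j => (u^j + (-u)^j)/2 - (if j = 0 then 1 else 0) - (if j = 2 then u^2 else 0) with hhd
  have e : nksE k u - (k.choose 2) * u^2 = ∑ j ∈ range (k+1), hh j * (k.choose j) := by
    have e1 := add_pow u 1 k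
    have e2 := add_pow (-u) 1 k
    simp only [one_pow, mul_one] at e1 e2
    unfold nksE
    rw [show 1 + u = u + 1 by ring, show 1 - u = -u + 1 by ring, e1, e2]
    simp only [hhd, sub_mul, Finset.sum_sub_distrib, ite_mul, zero_mul, Finset.sum_ite_eq', add_div, add_mul, Finset.sum_add_distrib]
    rw [if_pos (by simp), if_pos (by simp; omega)]
    simp only [Finset.sum_div, Nat.choose_zero_right, Nat.cast_one]
    have : ∀ v : ℝ, ∑ j ∈ range (k+1), v^j * (k.choose j) / 2 = ∑ j ∈ range (k+1), v^j/2 * (k.choose j) := by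
      intro v; apply Finset.sum_congr rfl; intros; ring
    rw [this, this]; ring
  have hb : ∀ j, |hh j| ≤ u^4 := by
    intro j
    have hu4 : 0 ≤ u^4 := by positivity
    rcases j with _ | _ | _ | _ | j
    · simp [hhd, hu4]
    · simp [hhd, hu4]
    · simp [hhd, hu4]
    · have : hh 3 = 0 := by simp [hhd]; ring
      show |hh 3| ≤ u^4
      rw [this]; simpa using hu4
    · have : hh (j+4) = (u^(j+4) + (-u)^(j+4))/2 := by simp [hhd]
      show |hh (j+4)| ≤ u^4
      rw [this]
      have hp : |u|^(j+4) ≤ u^4 := by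
        rw [pow_add]
        have h4 : |u|^4 = u^4 := by rw [← abs_pow]; exact abs_of_nonneg hu4
        rw [h4]
        have : |u|^j ≤ 1 := pow_le_one₀ (abs_nonneg _) h
        nlinarith only [this, hu4]
      rw [abs_div, abs_two, div_le_iff₀ (by norm_num)]
      refine (abs_add_le _ _).trans ?_
      rw [abs_pow, abs_pow, abs_neg]; linarith
  rw [e]
  calc |∑ j ∈ range (k+1), hh j * (k.choose j)| ≤ ∑ j ∈ range (k+1), |hh j * (k.choose j)| := Finset.abs_sum_le_sum_abs _ _
    _ ≤ ∑ j ∈ range (k+1), u^4 * (k.choose j) := by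
        apply Finset.sum_le_sum
        intro j _
        rw [abs_mul, Nat.abs_cast]
        exact mul_le_mul_of_nonneg_right (hb j) (by positivity)
    _ = 2^k * u^4 := by
        rw [← Finset.mul_sum, mul_comm]
        congr 1
        exact_mod_cast Nat.sum_range_choose k
end

section
open scoped BigOperators
open Finset

noncomputable def nksQ (k : ℕ) (β p x : ℝ) : ℝ := 1 + β^2 * p^2 * nksE k (x/p)

lemma nks_Q_abs {p x : ℝ} (hp : 1 ≤ p) (hx : |x| ≤ 1) : |x/p| ≤ 1 := by
  rw [abs_div, abs_of_pos (by linarith : 0 < p), div_le_one (by linarith)]; linarith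

lemma nks_Q_one (k : ℕ) (β : ℝ) {p x : ℝ} (hp : 1 ≤ p) (hx : |x| ≤ 1) : 1 ≤ nksQ k β p x := by
  obtain ⟨h1, h2⟩ := abs_le.1 (nks_Q_abs hp hx)
  have := nks_E_nonneg k h1 h2
  unfold nksQ
  have : 0 ≤ β^2 * p^2 * nksE k (x/p) := by positivity
  linarith

lemma nks_Q_le (k : ℕ) (β : ℝ) {p x : ℝ} (hp : 1 ≤ p) (hx : |x| ≤ 1) (hkx : k * |x| ≤ p) :
    nksQ k β p x ≤ 1 + β^2 * k^2 * x^2 := by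
  obtain ⟨h1, h2⟩ := abs_le.1 (nks_Q_abs hp hx)
  have hp0 : 0 < p := by linarith
  have := nks_E_quad k h1 h2 (by
    rw [← mul_div_assoc, abs_div, abs_of_pos hp0, div_le_one hp0, abs_mul, Nat.abs_cast]; exact hkx)
  unfold nksQ
  have h4 : β^2 * p^2 * nksE k (x/p) ≤ β^2 * p^2 * (k * (x/p))^2 := by gcongr
  have h5 : β^2 * p^2 * (k * (x/p))^2 = β^2 * k^2 * x^2 := by field_simp
  linarith

lemma nks_Q_exp (k : ℕ) (β : ℝ) {p x : ℝ} (hp : 1 ≤ p) (hx : |x| ≤ 1) (hkx : k * |x| ≤ p) :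
    nksQ k β p x ≤ Real.exp (β^2 * k^2 * x^2) := by
  linarith [Real.add_one_le_exp (β^2 * k^2 * x^2), nks_Q_le k β hp hx hkx]

lemma nks_Q_taylor {k : ℕ} (hk : 2 ≤ k) (β : ℝ) {p x : ℝ} (hp : 1 ≤ p) (hx : |x| ≤ 1) :
    |nksQ k β p x - (1 + β^2 * k.choose 2 * x^2)| ≤ β^2 * 2^k * x^4 := by
  have hp0 : 0 < p := by linarith
  have := nks_E_taylor hk (nks_Q_abs hp hx)
  have e : nksQ k β p x - (1 + β^2 * k.choose 2 * x^2) = β^2 * p^2 * (nksE k (x/p) - k.choose 2 * (x/p)^2) := by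
    unfold nksQ; field_simp; ring
  rw [e, abs_mul, abs_of_nonneg (by positivity : 0 ≤ β^2 * p^2)]
  calc β^2 * p^2 * |nksE k (x/p) - k.choose 2 * (x/p)^2| ≤ β^2 * p^2 * (2^k * (x/p)^4) := by gcongr
    _ = β^2 * 2^k * x^4 / p^2 := by field_simp
    _ ≤ β^2 * 2^k * x^4 := by
        apply div_le_self (by positivity)
        nlinarith only [hp]

lemma nks_Q_diff {k : ℕ} (hk : 2 ≤ k) (β : ℝ) {p q x r n : ℝ} {m : ℕ} (hp : 1 ≤ p) (hq : 1 ≤ q) (hx : |x| ≤ 1)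
    (hpx : k * |x| ≤ p) (hqx : k * |x| ≤ q) (hr : 0 < r) (hn : 0 < n) (hm : (m:ℝ) ≤ r * n)
    (hb : r * (β^2 * k^2) ≤ 1/8) :
    |nksQ k β p x ^ m - nksQ k β q x ^ m| ≤ 256 * r * (β^2 * 2^k) / n * Real.exp (n * x^2/4) := by
  set a := nksQ k β p x
  set b := nksQ k β q x
  have ha1 : 1 ≤ a := nks_Q_one k β hp hx
  have hb1 : 1 ≤ b := nks_Q_one k β hq hx
  have ha2 : a ≤ Real.exp (β^2 * k^2 * x^2) := nks_Q_exp k β hp hx hpx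
  have hb2 : b ≤ Real.exp (β^2 * k^2 * x^2) := nks_Q_exp k β hq hx hqx
  have hab : |a - b| ≤ 2 * (β^2 * 2^k) * x^4 := by
    have t1 := abs_le.1 (nks_Q_taylor hk β hp hx)
    have t2 := abs_le.1 (nks_Q_taylor hk β hq hx)
    rw [abs_le]; constructor <;> linarith [t1.1, t1.2, t2.1, t2.2]
  have h1 := abs_pow_sub_pow_le (a := a) (b := b) (n := m)
  rw [abs_of_pos (by linarith : 0 < a), abs_of_pos (by linarith : 0 < b)] at h1
  have hmax : max a b ^ (m-1) ≤ Real.exp (n * x^2/8) := by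
    calc max a b ^ (m-1) ≤ max a b ^ m := pow_le_pow_right₀ (le_max_of_le_left ha1) (Nat.sub_le _ _)
      _ ≤ Real.exp (β^2 * k^2 * x^2) ^ m := pow_le_pow_left₀ (by positivity) (max_le ha2 hb2) m
      _ = Real.exp (m * (β^2 * k^2 * x^2)) := by rw [Real.exp_nat_mul]
      _ ≤ Real.exp (n * x^2/8) := by
          apply Real.exp_le_exp.2
          calc m * (β^2 * k^2 * x^2) ≤ (r * n) * (β^2 * k^2 * x^2) := by gcongr
            _ = (r * (β^2 * k^2)) * (n * x^2) := by ring
            _ ≤ 1/8 * (n * x^2) := by gcongr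
            _ = _ := by ring
  have hy : (n * x^2)^2 ≤ 128 * Real.exp (n * x^2/8) := by
    have := Real.quadratic_le_exp_of_nonneg (show 0 ≤ n * x^2/8 by positivity)
    nlinarith only [this, show 0 ≤ n * x^2 by positivity]
  calc |a^m - b^m| ≤ |a - b| * m * max a b ^ (m-1) := h1
    _ ≤ (2 * (β^2 * 2^k) * x^4) * (r * n) * Real.exp (n * x^2/8) := by gcongr
    _ = 2 * r * (β^2 * 2^k) / n * ((n * x^2)^2 * Real.exp (n * x^2/8)) := by field_simp
    _ ≤ 2 * r * (β^2 * 2^k) / n * ((128 * Real.exp (n * x^2/8)) * Real.exp (n * x^2/8)) := by gcongr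
    _ = 256 * r * (β^2 * 2^k) / n * (Real.exp (n * x^2/8) * Real.exp (n * x^2/8)) := by ring
    _ = _ := by rw [← Real.exp_add]; congr 2; ring

lemma nks_Z_abs {n : ℕ} (z : Fin n → Bool) : |nksZ z| ≤ 1 := by
  have h : ∀ b, |nksSp b| = 1 := by intro b; rcases nksSp_cases b with h | h <;> simp [h]
  rcases Nat.eq_zero_or_pos n with h0 | h0
  · subst h0; simp [nksZ]
  have : Nonempty (Fin n) := ⟨⟨0, h0⟩⟩
  unfold nksZ
  refine (Finset.abs_expect_le _ _).trans ?_
  simp [h]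

/-- The averaged error bound. -/
lemma nks_err {k : ℕ} (hk : 400 ≤ k) {β r gap : ℝ} {n m : ℕ} (hn : 0 < n) (hr : 0 < r)
    (hm : (m:ℝ) ≤ r * n) (hb : r * (β^2 * k^2) ≤ 1/8)
    (hgap : ∀ x, -1 ≤ x → x ≤ 1 → 1/(k:ℝ) ≤ |x| →
      r * Real.log (1 + β^2 * nksE k x) ≤ Real.log 2 - Real.binEntropy ((1+x)/2) - gap) :
    (𝔼 z : Fin n → Bool, (nksQ k β 1 (nksZ z) ^ m - 2 * nksQ k β k (nksZ z) ^ m + nksQ k β (k^2) (nksZ z) ^ m))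
      ≤ 1536 * r * (β^2 * 2^k) / n + (n+1) * Real.exp (-(gap * n)) := by
  have hkr : (400:ℝ) ≤ k := by exact_mod_cast hk
  have hk0 : (0:ℝ) < k := by linarith
  have hk1 : (1:ℝ) ≤ k := by linarith
  have hk2 : (1:ℝ) ≤ (k:ℝ)^2 := one_le_pow₀ hk1
  have hkk : (k:ℝ) ≤ (k:ℝ)^2 := by nlinarith only [hk1]
  have hnr : (0:ℝ) < n := by exact_mod_cast hn
  have : Nonempty (Fin n) := ⟨⟨0, hn⟩⟩
  set D := 256 * r * (β^2 * 2^k) / n with hD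
  have hD0 : 0 ≤ D := by positivity
  set g : ℝ → ℝ := fun x => if 1/(k:ℝ) ≤ |x| then nksQ k β 1 x ^ m else 0 with hg
  have hpt : ∀ z : Fin n → Bool, (nksQ k β 1 (nksZ z) ^ m - 2 * nksQ k β k (nksZ z) ^ m + nksQ k β (k^2) (nksZ z) ^ m)
      ≤ 3 * D * Real.exp (n * (nksZ z)^2/4) + g (nksZ z) := by
    intro z
    have hx := nks_Z_abs z
    set x := nksZ z
    have hkx : k * |x| ≤ k := by nlinarith only [hx, hk0]
    have d1 := abs_le.1 (nks_Q_diff (p := k) (q := (k:ℝ)^2) (by omega) β hk1 hk2 hx hkx (hkx.trans hkk) hr hnr hm hb)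
    rw [← hD] at d1
    have hE : 0 ≤ D * Real.exp (n * x^2/4) := by positivity
    have hq1 : 0 ≤ nksQ k β (k^2) x ^ m := pow_nonneg (by linarith [nks_Q_one k β hk2 hx]) m
    by_cases hc : 1/(k:ℝ) ≤ |x|
    · simp only [hg, if_pos hc]
      linarith [d1.1, d1.2]
    · simp only [hg, if_neg hc]
      push Not at hc
      rw [lt_div_iff₀ hk0] at hc
      have hc' : k * |x| ≤ 1 := by linarith
      have d2 := abs_le.1 (nks_Q_diff (p := 1) (q := (k:ℝ)^2) (by omega) β le_rfl hk2 hx hc' (hkx.trans hkk) hr hnr hm hb)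
      rw [← hD] at d2
      linarith [d1.1, d1.2, d2.1, d2.2]
  have hg2 : ∀ x, -1 ≤ x → x ≤ 1 → g x ≤ Real.exp (n * (Real.log 2 - Real.binEntropy ((1+x)/2) - gap)) := by
    intro x h1 h2
    by_cases hc : 1/(k:ℝ) ≤ |x|
    · simp only [hg, if_pos hc]
      have hx : |x| ≤ 1 := abs_le.2 ⟨h1, h2⟩
      have q1 := nks_Q_one k β (le_refl (1:ℝ)) hx
      have e : nksQ k β 1 x = 1 + β^2 * nksE k x := by unfold nksQ; simp
      have l0 : 0 ≤ Real.log (nksQ k β 1 x) := Real.log_nonneg q1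
      have hh := hgap x h1 h2 hc
      rw [← e] at hh
      calc nksQ k β 1 x ^ m = Real.exp (m * Real.log (nksQ k β 1 x)) := by
            rw [Real.exp_nat_mul, Real.exp_log (by linarith)]
        _ ≤ _ := by
            apply Real.exp_le_exp.2
            calc m * Real.log (nksQ k β 1 x) ≤ (r * n) * Real.log (nksQ k β 1 x) := by gcongr
              _ = n * (r * Real.log (nksQ k β 1 x)) := by ring
              _ ≤ _ := by gcongr
    · simp only [hg, if_neg hc]; positivity
  calc _ ≤ 𝔼 z : Fin n → Bool, (3 * D * Real.exp (n * (nksZ z)^2/4) + g (nksZ z)) :=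
        Finset.expect_le_expect (fun z _ => hpt z)
    _ = 3 * D * (𝔼 z : Fin n → Bool, Real.exp (n * (nksZ z)^2/4)) + 𝔼 z : Fin n → Bool, g (nksZ z) := by
        rw [Finset.expect_add_distrib, ← Finset.mul_expect]
    _ ≤ 3 * D * 2 + (n+1) * Real.exp (-(gap * n)) := by
        have a1 := nks_subgauss hn
        have a2 := nks_large hn g gap hg2
        have : 3 * D * (𝔼 z : Fin n → Bool, Real.exp (n * (nksZ z)^2/4)) ≤ 3 * D * 2 := by gcongr
        linarith
    _ = _ := by rw [hD]; ring
end

section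
open scoped BigOperators
open Finset

def nksBad {k n m : ℕ} (F : Fin m → Fin k → Fin n × Bool) : Prop :=
  ∀ σ : Fin n → Bool, ∃ i, (∀ j, nksY (F i j) σ = 1) ∨ (∀ j, nksY (F i j) σ = -1)

open Classical in
noncomputable def nksPr (k n m : ℕ) : ℝ :=
  𝔼 F : Fin m → Fin k → Fin n × Bool, if nksBad F then (1:ℝ) else 0

lemma nks_iid_bound {k : ℕ} (hk : 400 ≤ k) {r : ℝ} (hr0 : 0 < r)
    (hr : r < 2^(k-1) * Real.log 2 - Real.log 2/2 - (1 + 8/(k:ℝ))/2) :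
    ∃ U A gap : ℝ, 0 < gap ∧ ∀ n : ℕ, 0 < n → ∀ η : ℝ, 0 < η → Real.log η < -1 →
      nksPr k n ⌊r * (n:ℝ)⌋₊ ≤ U/(-Real.log η - 1) + (A / n + (n+1) * Real.exp (-(gap * n)))/η^2 := by
  obtain ⟨gap, hgap0, hgap⟩ := nks_gap hk hr
  set N : ℝ := 2^(k-1) with hN
  set β : ℝ := 1/(N-1) with hβ
  have hkr : (400:ℝ) ≤ k := by exact_mod_cast hk
  have hk0 : (0:ℝ) < k := by linarith
  have hN4 : 16 * (k:ℝ)^4 ≤ N := nks_two_pow hk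
  have hk2 : (400:ℝ)^2 ≤ (k:ℝ)^2 := pow_le_pow_left₀ (by norm_num) hkr 2
  have hkk : 16 * (k:ℝ)^2 * 400^2 ≤ N := by
    have : (k:ℝ)^2 * 400^2 ≤ (k:ℝ)^2 * (k:ℝ)^2 := by gcongr
    nlinarith only [this, hN4]
  norm_num at hk2
  have hN1 : 1000 < N := by norm_num at hkk; linarith
  have hrN : r ≤ N := by
    have h1 : 0 < Real.log 2 := Real.log_pos (by norm_num)
    have h2 : Real.log 2 ≤ 1 := by linarith [Real.log_two_lt_d9]
    have h3 : 0 < 8/(k:ℝ) := by positivity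
    have h4 : N * Real.log 2 ≤ N * 1 := by gcongr
    linarith
  have hN1' : 0 < N - 1 := by linarith
  have hβ0 : 0 < β := by positivity
  have hβN : β * N ≤ 2 := by
    rw [hβ, div_mul_eq_mul_div, div_le_iff₀ hN1']; linarith
  have hγ : β * (k:ℝ)^2 ≤ 1/8 := by
    have : β * (16 * (k:ℝ)^2 * 400^2) ≤ β * N := by gcongr
    norm_num at this
    linarith
  have hNb : N * (β^2 * (k:ℝ)^2) ≤ 1/8 := by
    have e : N * (β^2 * (k:ℝ)^2) = (β * N) * (β * (k:ℝ)^2) := by ring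
    have h5 : β * (16 * (k:ℝ)^2 * 400^2) ≤ β * N := by gcongr
    norm_num at h5
    have h6 : (β * N) * (β * (k:ℝ)^2) ≤ 2 * (β * (k:ℝ)^2) := by gcongr
    rw [e]; linarith
  have hrb : r * (β^2 * (k:ℝ)^2) ≤ 1/8 := le_trans (by gcongr) hNb
  have hrb1 : (r+1) * (β^2 * (k:ℝ)^2) ≤ 1/4 := by
    have : 1 * (β^2 * (k:ℝ)^2) ≤ N * (β^2 * (k:ℝ)^2) := by gcongr; linarith
    linarith
  refine ⟨Real.exp (2*r) * (Real.log 2/2), 1536 * r * (β^2 * 2^k), gap, hgap0, ?_⟩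
  intro n hn η hη hη1
  have hnr : (0:ℝ) < n := by exact_mod_cast hn
  have hne : Nonempty (Fin n) := ⟨⟨0, hn⟩⟩
  set m := ⌊r * (n:ℝ)⌋₊ with hm
  have hmr : (m:ℝ) ≤ r * n := Nat.floor_le (by positivity)
  have hl2 : 0 < Real.log 2 := Real.log_pos (by norm_num)
  have kff : ∀ σ τ : Fin n → Bool, nksK (nksW k n β 1) (nksW k n β 1) σ τ = nksQ k β 1 (nksX σ τ) := by
    intro σ τ; rw [nks_kernel k hn]; unfold nksQ; simp; ring_nf; simp
  have kfw : ∀ σ τ : Fin n → Bool, nksK (nksW k n β 1) (nksW k n (β*(k:ℝ)^2) (1/k)) σ τ = nksQ k β k (nksX σ τ) := by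
    intro σ τ; rw [nks_kernel k hn]; unfold nksQ
    rw [show 1 * (1/(k:ℝ)) * nksX σ τ = nksX σ τ / k by ring]; ring
  have kww : ∀ σ τ : Fin n → Bool, nksK (nksW k n (β*(k:ℝ)^2) (1/k)) (nksW k n (β*(k:ℝ)^2) (1/k)) σ τ = nksQ k β (k^2) (nksX σ τ) := by
    intro σ τ; rw [nks_kernel k hn]; unfold nksQ
    rw [show (1/(k:ℝ)) * (1/(k:ℝ)) * nksX σ τ = nksX σ τ / (k:ℝ)^2 by field_simp]; ring
  have hth : |1/(k:ℝ)| ≤ 1 := by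
    rw [abs_of_pos (by positivity), div_le_one hk0]; linarith
  have hth2 : (k:ℝ) * |1/(k:ℝ)| ≤ 1 := by
    rw [abs_of_pos (by positivity)]; field_simp; exact le_rfl
  classical
  unfold nksPr
  refine nks_abstract (nksW k n (β*(k:ℝ)^2) (1/k)) (nksW k n β 1)
    (fun c σ => nks_W_lower _ _ (by positivity) hγ hth hth2 c σ) (fun σ => nks_W_mean k hn σ _ _)
    n (Real.log 2) _ _ η hnr m ?_ ?_ hl2.le ?_ hη hη1 nksBad ?_
  · intro t ht
    simp only [kww]
    rw [nks_avg_pair (fun x => nksQ k β (k^2) x ^ t * Real.exp (n * (nksQ k β (k^2) x - 1)))]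
    rw [Real.exp_log (by norm_num)]
    refine le_trans (Finset.expect_le_expect fun z _ => ?_) (nks_subgauss hn)
    have hx := nks_Z_abs z
    set x := nksZ z
    have hk1 : (1:ℝ) ≤ (k:ℝ)^2 := by linarith
    have hkx : k * |x| ≤ (k:ℝ)^2 := by
      calc k * |x| ≤ k * 1 := by gcongr
        _ ≤ (k:ℝ)^2 := by nlinarith only [hkr]
    have q1 := nks_Q_le k β hk1 hx hkx
    have q2 := nks_Q_exp k β hk1 hx hkx
    have q0 := nks_Q_one k β hk1 hx
    have htm : (t:ℝ) ≤ r * n := le_trans (by exact_mod_cast ht) hmr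
    calc nksQ k β (k^2) x ^ t * Real.exp (n * (nksQ k β (k^2) x - 1))
        ≤ Real.exp (β^2 * k^2 * x^2) ^ t * Real.exp (n * (β^2 * k^2 * x^2)) := by
          gcongr
          linarith
      _ = Real.exp (t * (β^2 * k^2 * x^2) + n * (β^2 * k^2 * x^2)) := by
          rw [Real.exp_add, Real.exp_nat_mul _ t]
      _ ≤ Real.exp (n * x^2/4) := by
          apply Real.exp_le_exp.2
          calc t * (β^2 * k^2 * x^2) + n * (β^2 * k^2 * x^2) ≤ (r*n) * (β^2 * k^2 * x^2) + n * (β^2 * k^2 * x^2) := by gcongr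
            _ = ((r+1) * (β^2 * (k:ℝ)^2)) * (n * x^2) := by ring
            _ ≤ 1/4 * (n * x^2) := by gcongr
            _ = _ := by ring
  · gcongr
    calc (1 + 2/(n:ℝ))^m ≤ Real.exp (2/n) ^ m := by
          gcongr; linarith [Real.add_one_le_exp (2/(n:ℝ))]
      _ = Real.exp (m * (2/n)) := by rw [Real.exp_nat_mul]
      _ ≤ Real.exp (2*r) := by
          apply Real.exp_le_exp.2
          rw [← mul_div_assoc, div_le_iff₀ hnr]; linarith
  · simp only [kff, kfw, kww]
    rw [nks_avg_pair (fun x => nksQ k β 1 x ^ m - 2 * nksQ k β k x ^ m + nksQ k β (k^2) x ^ m)]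
    exact nks_err hk hn hr0 hmr hrb hgap
  · intro F hF σ
    obtain ⟨i, hi⟩ := hF σ
    exact Finset.prod_eq_zero (Finset.mem_univ i) (nks_W_zero (by omega) _ _ hi)

lemma nks_iid {k : ℕ} (hk : 400 ≤ k) {r : ℝ} (hr0 : 0 < r)
    (hr : r < 2^(k-1) * Real.log 2 - Real.log 2/2 - (1 + 8/(k:ℝ))/2) :
    Filter.Tendsto (fun n : ℕ => nksPr k n ⌊r * (n:ℝ)⌋₊) Filter.atTop (nhds 0) := by
  obtain ⟨U, A, gap, hgap, hb⟩ := nks_iid_bound hk hr0 hr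
  have hδ : Filter.Tendsto (fun n : ℕ => A / n + ((n:ℝ)+1) * Real.exp (-(gap * n))) Filter.atTop (nhds 0) := by
    have t0 : Filter.Tendsto (fun n : ℕ => gap * (n:ℝ)) Filter.atTop Filter.atTop :=
      tendsto_natCast_atTop_atTop.const_mul_atTop hgap
    have t1 := (Real.tendsto_pow_mul_exp_neg_atTop_nhds_zero 1).comp t0
    have t2 := (Real.tendsto_pow_mul_exp_neg_atTop_nhds_zero 0).comp t0
    have t3 := tendsto_const_div_atTop_nhds_zero_nat A
    have := (t3.add (t1.const_mul (1/gap))).add t2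
    simp only [mul_zero, add_zero] at this
    refine this.congr (fun n => ?_)
    simp only [Function.comp]
    have e : 1/gap * ((gap * (n:ℝ))^1 * Real.exp (-(gap * n))) = n * Real.exp (-(gap * n)) := by
      field_simp
    rw [e]
    ring
  rw [Metric.tendsto_atTop]
  intro ε hε
  set s := 2 * (|U|+1)/ε with hs
  have hs0 : 0 < s := by positivity
  set η := Real.exp (-1-s) with hη
  have hη0 : 0 < η := Real.exp_pos _
  have hl : Real.log η = -1 - s := Real.log_exp _
  have h2 := hδ.div_const (η^2)
  rw [zero_div, Metric.tendsto_atTop] at h2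
  obtain ⟨n0, hn0⟩ := h2 (ε/2) (by positivity)
  refine ⟨max n0 1, fun n hn => ?_⟩
  have hb1 := hb n (by have := le_max_right n0 1; omega) η hη0 (by rw [hl]; linarith)
  have h3 := hn0 n ((le_max_left _ _).trans hn)
  rw [Real.dist_eq, sub_zero] at h3 ⊢
  have h4 := (abs_lt.1 h3).2
  rw [hl, show -(-1 - s) - 1 = s by ring] at hb1
  have h5 : U / s < ε/2 := by
    rw [div_lt_iff₀ hs0, hs]
    field_simp
    linarith [le_abs_self U]
  have h6 : 0 ≤ nksPr k n ⌊r * (n:ℝ)⌋₊ := by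
    unfold nksPr
    apply Finset.expect_nonneg
    intro F _
    split_ifs <;> norm_num
  rw [abs_of_nonneg h6]
  linarith
end

section
open scoped BigOperators
open Finset

lemma nks_fiber_card {n k : ℕ} (V : Finset (Fin n)) (hV : V.card = k)
    (S : Finset (Finset (Fin n × Bool))) (hS : ∀ C, C ∈ S ↔ (C.card = k ∧ C.image Prod.fst = V)) :
    S.card = 2^k := by
  classical
  rw [← hV, ← Finset.card_powerset]
  symm
  have himg : ∀ A : Finset (Fin n), (V.image (fun v => (v, decide (v ∈ A)))).image Prod.fst = V := by
    intro A
    rw [Finset.image_image]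
    exact Finset.image_id
  refine Finset.card_bij (fun A _ => V.image (fun v => (v, decide (v ∈ A)))) ?_ ?_ ?_
  · intro A hA
    rw [hS]
    refine ⟨?_, himg A⟩
    rw [Finset.card_image_of_injective _ (fun a b h => congrArg Prod.fst h), hV]
  · intro A hA B hB h
    rw [Finset.mem_powerset] at hA hB
    have key : ∀ A : Finset (Fin n), A ⊆ V → ∀ v, v ∈ A ↔ (v, true) ∈ V.image (fun v => (v, decide (v ∈ A))) := by
      intro A hA v
      simp only [Finset.mem_image, Prod.mk.injEq, decide_eq_true_eq]
      constructor
      · intro h; exact ⟨v, hA h, rfl, h⟩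
      · rintro ⟨w, _, rfl, h⟩; exact h
    ext v
    rw [key A hA, key B hB]
    exact Eq.to_iff (congrArg (fun s => (v, true) ∈ s) h)
  · intro C hC
    rw [hS] at hC
    obtain ⟨h1, h2⟩ := hC
    have hinj : Set.InjOn Prod.fst (C : Set (Fin n × Bool)) := by
      rw [← Finset.card_image_iff, h2, h1, hV]
    refine ⟨(C.filter (fun l => l.2 = true)).image Prod.fst, ?_, ?_⟩
    · rw [Finset.mem_powerset, ← h2]
      exact Finset.image_subset_image (Finset.filter_subset _ _)
    · symm
      apply Finset.eq_of_subset_of_card_le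
      · rintro ⟨v, b⟩ hl
        rw [Finset.mem_image]
        refine ⟨v, ?_, ?_⟩
        · rw [← h2]; exact Finset.mem_image_of_mem Prod.fst hl
        · rw [Prod.mk.injEq]
          refine ⟨rfl, ?_⟩
          cases b with
          | true =>
            rw [decide_eq_true_eq, Finset.mem_image]
            exact ⟨(v, true), by simp [hl], rfl⟩
          | false =>
            rw [decide_eq_false_iff_not, Finset.mem_image]
            rintro ⟨⟨w, c⟩, hw, hwv⟩
            simp only at hwv
            subst hwv
            simp only [Finset.mem_filter] at hw
            have := hinj hw.1 hl rfl
            simp only [Prod.mk.injEq] at this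
            rw [hw.2] at this
            simp at this
      · rw [h1, ← hV]; exact Finset.card_image_le

open Classical in
lemma nks_proper_card (n k : ℕ) :
    (univ.filter (fun C : Finset (Fin n × Bool) => IsProperClause n k C)).card = 2^k * n.choose k := by
  have h := Finset.card_eq_sum_card_fiberwise (f := fun C : Finset (Fin n × Bool) => C.image Prod.fst)
    (s := univ.filter (fun C : Finset (Fin n × Bool) => IsProperClause n k C))
    (t := powersetCard k (univ : Finset (Fin n))) (by
      intro C hC
      simp only [Finset.coe_filter, Finset.mem_univ, true_and] at hC
      rw [Finset.mem_coe, Finset.mem_powersetCard]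
      exact ⟨Finset.subset_univ _, hC.2⟩)
  rw [h, Finset.sum_congr rfl (g := fun _ => 2^k)]
  · simp [mul_comm]
  · intro V hV
    rw [Finset.mem_powersetCard] at hV
    apply nks_fiber_card V hV.2
    intro C
    rw [Finset.mem_filter, Finset.mem_filter]
    constructor
    · rintro ⟨⟨_, h1⟩, h2⟩; exact ⟨h1.1, h2⟩
    · rintro ⟨h1, h2⟩; exact ⟨⟨Finset.mem_univ _, h1, by rw [h2]; exact hV.2⟩, h2⟩

lemma nks_enum {α : Type*} [DecidableEq α] {k : ℕ} (C : Finset α) (h : C.card = k) :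
    ∃ e : Fin k → α, Function.Injective e ∧ univ.image e = C := by
  refine ⟨fun i => (C.equivFinOfCardEq h).symm i, ?_, ?_⟩
  · intro a b hab
    exact (C.equivFinOfCardEq h).symm.injective (Subtype.ext hab)
  · ext x
    simp only [Finset.mem_image, Finset.mem_univ, true_and]
    constructor
    · rintro ⟨i, rfl⟩; exact ((C.equivFinOfCardEq h).symm i).2
    · intro hx; exact ⟨C.equivFinOfCardEq h ⟨x, hx⟩, by simp⟩

open Classical in
lemma nks_bad_count (n k m : ℕ) :
    (univ.filter (fun G : Finset (Finset (Fin n × Bool)) => (G.card = m ∧ ∀ C ∈ G, IsProperClause n k C) ∧ ¬ IsNAESatisfiable G)).card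
      * (m.factorial * k.factorial^m) ≤
    (univ.filter (fun F : Fin m → Fin k → Fin n × Bool => nksBad F)).card := by
  set X := univ.filter (fun G : Finset (Finset (Fin n × Bool)) => (G.card = m ∧ ∀ C ∈ G, IsProperClause n k C) ∧ ¬ IsNAESatisfiable G) with hX
  have hX' : ∀ G ∈ X, (G.card = m ∧ ∀ C ∈ G, IsProperClause n k C) ∧ ¬ IsNAESatisfiable G := by
    intro G hG; simpa [hX] using hG
  choose e he using (fun G : {G // G ∈ X} => nks_enum G.1 (hX' G.1 G.2).1.1)
  choose d hd using (fun C : {C : Finset (Fin n × Bool) // C.card = k} => nks_enum C.1 C.2)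
  have hmem : ∀ (G : {G // G ∈ X}) i, e G i ∈ G.1 := by
    intro G i
    have : e G i ∈ univ.image (e G) := Finset.mem_image_of_mem _ (Finset.mem_univ i)
    rwa [(he G).2] at this
  have hk : ∀ (G : {G // G ∈ X}) i, (e G i).card = k := fun G i => ((hX' G.1 G.2).1.2 _ (hmem G i)).1
  set ι : {G // G ∈ X} × Equiv.Perm (Fin m) × (Fin m → Equiv.Perm (Fin k)) → (Fin m → Fin k → Fin n × Bool) :=
    fun q i j => d ⟨e q.1 (q.2.1 i), hk _ _⟩ (q.2.2 i j) with hι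
  have himg : ∀ q i, univ.image (ι q i) = e q.1 (q.2.1 i) := by
    intro q i
    have h1 := (hd ⟨e q.1 (q.2.1 i), hk _ _⟩).2
    have h2 : univ.image (ι q i) = univ.image (d ⟨e q.1 (q.2.1 i), hk _ _⟩) := by
      ext x
      simp only [hι, Finset.mem_image, Finset.mem_univ, true_and]
      constructor
      · rintro ⟨j, hj⟩; exact ⟨_, hj⟩
      · rintro ⟨j, hj⟩; exact ⟨(q.2.2 i).symm j, by simpa using hj⟩
    rw [h2, h1]
  have himg2 : ∀ q : {G // G ∈ X} × Equiv.Perm (Fin m) × (Fin m → Equiv.Perm (Fin k)),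
      univ.image (fun i => univ.image (ι q i)) = q.1.1 := by
    intro q
    simp only [himg]
    rw [← (he q.1).2]
    ext x
    simp only [Finset.mem_image, Finset.mem_univ, true_and]
    constructor
    · rintro ⟨j, hj⟩; exact ⟨_, hj⟩
    · rintro ⟨j, hj⟩; exact ⟨q.2.1.symm j, by simpa using hj⟩
  have hinj : Function.Injective ι := by
    rintro ⟨G, π, ρ⟩ ⟨G', π', ρ'⟩ h
    have hG : G = G' := by
      apply Subtype.ext
      have h1 := himg2 ⟨G, π, ρ⟩
      have h2 := himg2 ⟨G', π', ρ'⟩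
      rw [h] at h1
      exact h1.symm.trans h2
    subst hG
    have hπ : π = π' := by
      ext1 i
      have h1 := himg ⟨G, π, ρ⟩ i
      have h2 := himg ⟨G, π', ρ'⟩ i
      rw [h] at h1
      exact (he G).1 (h1.symm.trans h2)
    subst hπ
    have hρ : ρ = ρ' := by
      funext i
      ext1 j
      exact (hd _).1 (congrFun (congrFun h i) j)
    subst hρ
    rfl
  have hbad : ∀ q, nksBad (ι q) := by
    intro q σ
    have hns := (hX' q.1.1 q.1.2).2
    unfold IsNAESatisfiable at hns
    push Not at hns
    obtain ⟨C, hC, hCσ⟩ := hns σ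
    rw [← himg2 q, Finset.mem_image] at hC
    obtain ⟨i, _, hi⟩ := hC
    refine ⟨i, ?_⟩
    unfold NAESatisfiesClause at hCσ
    rw [not_and_or] at hCσ
    push Not at hCσ
    have hmemi : ∀ j, ι q i j ∈ C := fun j => by
      rw [← hi]; exact Finset.mem_image_of_mem _ (Finset.mem_univ j)
    rcases hCσ with h | h
    · right
      intro j
      have := h _ (hmemi j)
      unfold nksY
      rw [nksSp_mul]
      have h3 : ((ι q i j).2 == σ (ι q i j).1) = false := by
        rw [beq_eq_false_iff_ne]; exact fun h' => this h'.symm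
      rw [h3]; simp [nksSp]
    · left
      intro j
      have := h _ (hmemi j)
      unfold nksY
      rw [nksSp_mul, this]; simp [nksSp]
  have hcard := Finset.card_le_card_of_injOn (s := univ) (t := univ.filter (fun F : Fin m → Fin k → Fin n × Bool => nksBad F)) ι
    (by intro q _; simpa using hbad q) hinj.injOn
  refine le_trans (le_of_eq ?_) hcard
  simp [Fintype.card_perm]
end

section
open scoped BigOperators
open Finset

lemma nks_exp_lower {u : ℝ} (h0 : 0 ≤ u) (h1 : u ≤ 1/2) : Real.exp (-(2*u)) ≤ 1 - u := by
  rw [Real.exp_neg]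
  have h2 := Real.add_one_le_exp (2*u)
  rw [inv_le_comm₀ (Real.exp_pos _) (by linarith)]
  refine le_trans ?_ h2
  rw [inv_le_iff_one_le_mul₀ (by linarith)]
  nlinarith only [h0, h1]

/-- The density of proper, distinct clause sequences. -/
lemma nks_density {k : ℕ} (hk : 2 ≤ k) {r : ℝ} (hr : 0 < r) :
    ∃ c : ℝ, 0 < c ∧ ∃ n0 : ℕ, ∀ n ≥ n0, ∀ m : ℕ, (m:ℝ) ≤ r * n →
      c * ((2*(n:ℝ))^k)^m ≤ ((2^k * n.choose k).choose m : ℝ) * (m.factorial * k.factorial^m) := by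
  set c0 : ℝ := k^2 + k.factorial * r with hc0
  have hc00 : 0 ≤ c0 := by positivity
  refine ⟨Real.exp (-(2*c0*r)), Real.exp_pos _, ⌈2*c0⌉₊ + k + 1, ?_⟩
  intro n hn m hm
  have hn1 : 2 * c0 ≤ n := by
    refine (Nat.le_ceil _).trans ?_
    exact_mod_cast (by omega : ⌈2*c0⌉₊ ≤ n)
  have hnk : k ≤ n := by omega
  have hnp : 0 < n := by omega
  have hnr : (0:ℝ) < n := by exact_mod_cast hnp
  have hn1r : (1:ℝ) ≤ n := by exact_mod_cast hnp
  -- descFactorial lower bound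
  have d1 : (n:ℝ)^k * (1 - k^2/n) ≤ (k.factorial : ℝ) * n.choose k := by
    have e1 : ((n.descFactorial k : ℕ):ℝ) = (k.factorial : ℝ) * n.choose k := by
      rw [Nat.descFactorial_eq_factorial_mul_choose]; push_cast; ring
    rw [← e1]
    have h1 : (((n + 1 - k)^k : ℕ):ℝ) ≤ ((n.descFactorial k : ℕ):ℝ) := by
      exact_mod_cast Nat.pow_sub_le_descFactorial n k
    refine le_trans ?_ h1
    rw [Nat.cast_pow, Nat.cast_sub (by omega)]
    push_cast
    have h2 : 1 + (k:ℝ) * (-(k/n)) ≤ (1 + (-((k:ℝ)/n)))^k := by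
      apply one_add_mul_le_pow
      have : (k:ℝ)/n ≤ 1 := by rw [div_le_one hnr]; exact_mod_cast hnk
      linarith
    calc (n:ℝ)^k * (1 - k^2/n) = (n:ℝ)^k * (1 + (k:ℝ) * (-(k/n))) := by ring
      _ ≤ (n:ℝ)^k * (1 + (-((k:ℝ)/n)))^k := by gcongr
      _ = ((n:ℝ) - k)^k := by rw [← mul_pow]; congr 1; field_simp; ring
      _ ≤ ((n:ℝ) + 1 - k)^k := by
          apply pow_le_pow_left₀
          · have : (k:ℝ) ≤ n := by exact_mod_cast hnk
            linarith
          · linarith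
  set Nc := 2^k * n.choose k with hNc
  -- (Nc - m) * k! ≥ (2n)^k (1 - c0/n)
  have d2 : (2*(n:ℝ))^k * (1 - c0/n) ≤ ((Nc:ℝ) - m) * k.factorial := by
    have h3 : (m:ℝ) * k.factorial ≤ (2*(n:ℝ))^k * (k.factorial * r / n) := by
      have h4 : (n:ℝ)^2 ≤ (2*(n:ℝ))^k := by
        calc (n:ℝ)^2 ≤ (n:ℝ)^k := pow_le_pow_right₀ hn1r hk
          _ ≤ (2*(n:ℝ))^k := by gcongr; linarith
      calc (m:ℝ) * k.factorial ≤ (r * n) * k.factorial := by gcongr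
        _ = (n:ℝ)^2 * (k.factorial * r / n) := by field_simp
        _ ≤ _ := by gcongr
    have h5 : (Nc:ℝ) * k.factorial = 2^k * (k.factorial * n.choose k) := by
      rw [hNc]; push_cast; ring
    have h6 : (2:ℝ)^k * ((n:ℝ)^k * (1 - k^2/n)) ≤ 2^k * (k.factorial * n.choose k) := by gcongr
    have h7 : (2*(n:ℝ))^k * (1 - c0/n) = (2:ℝ)^k * ((n:ℝ)^k * (1 - k^2/n)) - (2*(n:ℝ))^k * (k.factorial * r / n) := by
      rw [hc0, mul_pow]; field_simp; ring
    rw [h7, sub_mul, h5]; linarith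
  have hu1 : c0/n ≤ 1/2 := by rw [div_le_iff₀ hnr]; linarith
  have hu0 : 0 ≤ c0/n := by positivity
  have hkf : (0:ℝ) < k.factorial := by exact_mod_cast Nat.factorial_pos k
  have hNm : (0:ℝ) < (Nc:ℝ) - m := by
    have : 0 < (2*(n:ℝ))^k * (1 - c0/n) := by
      apply mul_pos (by positivity); linarith
    exact pos_of_mul_pos_left (this.trans_le d2) hkf.le
  have hNm' : m ≤ Nc := by
    have : (m:ℝ) ≤ Nc := by linarith
    exact_mod_cast this
  have d3 : ((Nc:ℝ) - m)^m ≤ (Nc.choose m : ℝ) * m.factorial := by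
    have e1 : ((Nc.descFactorial m : ℕ):ℝ) = (Nc.choose m : ℝ) * m.factorial := by
      rw [Nat.descFactorial_eq_factorial_mul_choose]; push_cast; ring
    rw [← e1]
    have h1 : (((Nc + 1 - m)^m : ℕ):ℝ) ≤ ((Nc.descFactorial m : ℕ):ℝ) := by
      exact_mod_cast Nat.pow_sub_le_descFactorial Nc m
    refine le_trans ?_ h1
    rw [Nat.cast_pow, Nat.cast_sub (by omega)]
    push_cast
    exact pow_le_pow_left₀ hNm.le (by linarith) m
  have d4 : Real.exp (-(2*c0*r)) ≤ (1 - c0/n)^m := by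
    calc Real.exp (-(2*c0*r)) ≤ Real.exp (m * (-(2*(c0/n)))) := by
          apply Real.exp_le_exp.2
          have : (m:ℝ) * (2*(c0/n)) ≤ (r * n) * (2*(c0/n)) := by gcongr
          have e : (r * n) * (2*(c0/n)) = 2 * c0 * r := by field_simp
          linarith
      _ = Real.exp (-(2*(c0/n)))^m := Real.exp_nat_mul _ _
      _ ≤ _ := by gcongr; exact nks_exp_lower hu0 hu1
  calc Real.exp (-(2*c0*r)) * ((2*(n:ℝ))^k)^m ≤ (1 - c0/n)^m * ((2*(n:ℝ))^k)^m := by gcongr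
    _ = ((2*(n:ℝ))^k * (1 - c0/n))^m := by rw [← mul_pow, mul_comm]
    _ ≤ (((Nc:ℝ) - m) * k.factorial)^m := by
        apply pow_le_pow_left₀ _ d2
        apply mul_nonneg (by positivity); linarith
    _ = ((Nc:ℝ) - m)^m * (k.factorial:ℝ)^m := by rw [mul_pow]
    _ ≤ ((Nc.choose m : ℝ) * m.factorial) * (k.factorial:ℝ)^m := by gcongr
    _ = _ := by ring

lemma nks_Pr_eq (k n m : ℕ) [DecidablePred (fun F : Fin m → Fin k → Fin n × Bool => nksBad F)] :
    ((univ.filter (fun F : Fin m → Fin k → Fin n × Bool => nksBad F)).card : ℝ) = nksPr k n m * ((2*(n:ℝ))^k)^m := by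
  rcases Nat.eq_zero_or_pos (Fintype.card (Fin m → Fin k → Fin n × Bool)) with h | h
  · have he : IsEmpty (Fin m → Fin k → Fin n × Bool) := Fintype.card_eq_zero_iff.1 h
    unfold nksPr
    simp
  · have hc : (Fintype.card (Fin m → Fin k → Fin n × Bool) : ℝ) = ((2*(n:ℝ))^k)^m := by
      simp [mul_comm]
    unfold nksPr
    rw [Fintype.expect_eq_sum_div_card, ← hc, div_mul_cancel₀ _ (by exact_mod_cast h.ne'), Finset.card_filter]
    push_cast
    apply Finset.sum_congr rfl
    intro F _
    congr

lemma nks_transfer {k : ℕ} (hk : 2 ≤ k) {r : ℝ} (hr : 0 < r)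
    (h : Filter.Tendsto (fun n : ℕ => nksPr k n ⌊r * (n:ℝ)⌋₊) Filter.atTop (nhds 0)) :
    Filter.Tendsto
          (fun n : ℕ =>
            (Nat.card {F : Finset (Finset (Fin n × Bool)) //
                F.card = ⌊r * (n : ℝ)⌋₊ ∧ (∀ C ∈ F, IsProperClause n k C) ∧
                  IsNAESatisfiable F} : ℝ) /
              (Nat.choose (2 ^ k * Nat.choose n k) ⌊r * (n : ℝ)⌋₊ : ℝ))
          Filter.atTop (nhds 1) := by
  classical
  obtain ⟨c, hc, n0, hden⟩ := nks_density hk hr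
  have hlow : Filter.Tendsto (fun n : ℕ => 1 - nksPr k n ⌊r * (n:ℝ)⌋₊ / c) Filter.atTop (nhds 1) := by
    have := (h.div_const c).const_sub 1
    simpa using this
  have key : ∀ n ≥ n0 + 1, ∀ m : ℕ, (m:ℝ) ≤ r * n →
      1 - nksPr k n m / c ≤ (Nat.card {F : Finset (Finset (Fin n × Bool)) //
                F.card = m ∧ (∀ C ∈ F, IsProperClause n k C) ∧ IsNAESatisfiable F} : ℝ) /
              (Nat.choose (2 ^ k * Nat.choose n k) m : ℝ) ∧
      (Nat.card {F : Finset (Finset (Fin n × Bool)) //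
                F.card = m ∧ (∀ C ∈ F, IsProperClause n k C) ∧ IsNAESatisfiable F} : ℝ) /
              (Nat.choose (2 ^ k * Nat.choose n k) m : ℝ) ≤ 1 := by
    intro n hn m hm
    have hnr : (0:ℝ) < n := by exact_mod_cast (by omega : 0 < n)
    have hd := hden n (by omega) m hm
    set T := univ.filter (fun G : Finset (Finset (Fin n × Bool)) => G.card = m ∧ ∀ C ∈ G, IsProperClause n k C) with hT
    have hTc : T.card = (2^k * n.choose k).choose m := by
      rw [← nks_proper_card, ← Finset.card_powersetCard]
      congr 1
      ext G
      simp only [hT, Finset.mem_filter, Finset.mem_univ, true_and, Finset.mem_powersetCard, Finset.subset_iff]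
      tauto
    have hgood : Nat.card {F : Finset (Finset (Fin n × Bool)) //
                F.card = m ∧ (∀ C ∈ F, IsProperClause n k C) ∧ IsNAESatisfiable F} =
                (T.filter (fun G => IsNAESatisfiable G)).card := by
      rw [Nat.card_eq_fintype_card, Fintype.card_subtype, hT, Finset.filter_filter]
      congr 1
      ext G
      simp only [Finset.mem_filter, and_assoc]
    have hsum := Finset.card_filter_add_card_filter_not (s := T) (fun G => IsNAESatisfiable G)
    have hbad := nks_bad_count n k m
    rw [← Finset.filter_filter, ← hT] at hbad
    rw [hgood]
    set g := (T.filter (fun G => IsNAESatisfiable G)).card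
    set b := (T.filter (fun G => ¬ IsNAESatisfiable G)).card
    rw [hTc] at hsum
    have hbad' : (b:ℝ) * (m.factorial * (k.factorial:ℝ)^m) ≤ nksPr k n m * ((2*(n:ℝ))^k)^m := by
      rw [← nks_Pr_eq]; exact_mod_cast hbad
    set W := (2^k * n.choose k).choose m
    have hsum' : (g:ℝ) + b = W := by exact_mod_cast hsum
    have hpw : 0 < ((2*(n:ℝ))^k)^m := by positivity
    have hmf : (0:ℝ) < m.factorial * (k.factorial:ℝ)^m := by
      have := Nat.factorial_pos m
      have := Nat.factorial_pos k
      positivity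
    have hW : (0:ℝ) < W := by
      have : 0 < (W:ℝ) * (m.factorial * (k.factorial:ℝ)^m) := lt_of_lt_of_le (by positivity) hd
      exact pos_of_mul_pos_left this hmf.le
    have hP0 : 0 ≤ nksPr k n m := by
      have : 0 ≤ (b:ℝ) * (m.factorial * (k.factorial:ℝ)^m) := by positivity
      exact nonneg_of_mul_nonneg_left (this.trans hbad') hpw
    have hb : (b:ℝ) ≤ nksPr k n m / c * W := by
      have h1 : nksPr k n m * ((2*(n:ℝ))^k)^m ≤ nksPr k n m / c * (W * (m.factorial * (k.factorial:ℝ)^m)) := by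
        calc nksPr k n m * ((2*(n:ℝ))^k)^m = nksPr k n m / c * (c * ((2*(n:ℝ))^k)^m) := by field_simp
          _ ≤ _ := by gcongr
      have h2 : (b:ℝ) * (m.factorial * (k.factorial:ℝ)^m) ≤ (nksPr k n m / c * W) * (m.factorial * (k.factorial:ℝ)^m) := by
        linarith
      exact le_of_mul_le_mul_right h2 hmf
    constructor
    · rw [le_div_iff₀ hW]; linarith
    · rw [div_le_one hW]
      have : (0:ℝ) ≤ b := by positivity
      linarith
  refine tendsto_of_tendsto_of_tendsto_of_le_of_le' hlow tendsto_const_nhds ?_ ?_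
  · filter_upwards [Filter.eventually_ge_atTop (n0+1)] with n hn
    exact (key n hn _ (Nat.floor_le (by positivity))).1
  · filter_upwards [Filter.eventually_ge_atTop (n0+1)] with n hn
    exact (key n hn _ (Nat.floor_le (by positivity))).2
end

/-- There is a sequence `t k → 0` such that for all `k ≥ 3` and
`0 < r < 2^(k-1) ln 2 - (ln 2)/2 - (1 + t k)/2`, the probability that a uniformly
random `k`-CNF formula with `⌊rn⌋` clauses is NAE-satisfiable tends to `1`. -/
theorem nae_ksat_sat_whp :
    ∃ t : ℕ → ℝ, Filter.Tendsto t Filter.atTop (nhds 0) ∧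
      ∀ k : ℕ, 3 ≤ k → ∀ r : ℝ, 0 < r →
        r < 2 ^ (k - 1) * Real.log 2 - Real.log 2 / 2 - (1 + t k) / 2 →
        Filter.Tendsto
          (fun n : ℕ =>
            (Nat.card {F : Finset (Finset (Fin n × Bool)) //
                F.card = ⌊r * (n : ℝ)⌋₊ ∧ (∀ C ∈ F, IsProperClause n k C) ∧
                  IsNAESatisfiable F} : ℝ) /
              (Nat.choose (2 ^ k * Nat.choose n k) ⌊r * (n : ℝ)⌋₊ : ℝ))
          Filter.atTop (nhds 1) := by
  refine ⟨fun k => if k < 400 then 2^(k+1) else 8/(k:ℝ), ?_, ?_⟩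
  · refine (tendsto_const_div_atTop_nhds_zero_nat 8).congr' ?_
    filter_upwards [Filter.eventually_ge_atTop 400] with k hk
    rw [if_neg (by omega)]
  · intro k hk r hr0 hr
    by_cases h : k < 400
    · exfalso
      simp only [if_pos h] at hr
      have h1 : 0 < Real.log 2 := Real.log_pos (by norm_num)
      have h2 : Real.log 2 ≤ 1 := by linarith [Real.log_two_lt_d9]
      obtain ⟨j, rfl⟩ : ∃ j, k = j + 1 := ⟨k-1, by omega⟩
      simp only [Nat.add_sub_cancel] at hr
      have h3 : (2:ℝ)^j * Real.log 2 ≤ 2^j * 1 := by gcongr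
      have h4 : (2:ℝ)^(j+1+1) = 4 * 2^j := by ring
      have h5 : (0:ℝ) < 2^j := by positivity
      rw [h4] at hr
      linarith
    · simp only [if_neg h] at hr
      exact nks_transfer (by omega) hr0 (nks_iid (by omega) hr0 hr)
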